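/- arXiv:2409.00943 — 2 statements merged into one kernel-verified Lean document; each statement's English description precedes it below -/
import Mathlib

section
/- Let G be a finite simple graph, let λ be a partition of |V(G)|, and let ≤ be a partial order on the vertices of G such that any two nonadjacent vertices are comparable. Then the coefficient of the Schur function s_λ in the chromatic symmetric function X_G equals the sum of sgn(T) over all special rim hook G-tabloids T of shape λ: [s_λ]X_G = Σ_{T ∈ T_{λ,G}} sgn(T). -/
open scoped Classical

/-! ### Cells and Young diagrams -/

/-- A cell of a Young diagram: `(row, column)`, both 0-indexed, rows from the top. -/
abbrev Cell : Type := ℕ × ℕ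

/-- The length of row `i` (0-indexed from the top) of the Young diagram of the
partition `lam`, whose parts are arranged in weakly decreasing order. -/
def rowLen {N : ℕ} (lam : Nat.Partition N) (i : ℕ) : ℕ :=
  ((lam.parts.sort (· ≤ ·)).reverse).getD i 0

/-- The Young diagram of a partition, as a set of cells. -/
def diag {N : ℕ} (lam : Nat.Partition N) : Set Cell :=
  {c : Cell | c.2 < rowLen lam c.1}

/-- The number of rows (the length) of a partition. -/
def numRows {N : ℕ} (lam : Nat.Partition N) : ℕ := Multiset.card lam.parts

/-! ### Chromatic symmetric functions and Schur functions, as monomial-coefficient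
functions.  A formal power series of bounded degree in the commuting variables
`x_0, x_1, x_2, …` is recorded by the map sending an exponent vector `μ : ℕ → ℕ`
(only finitely many nonzero entries ever matter) to the coefficient of the monomial
`∏ i, x_i ^ μ i`.  Colors / tableau entries are positive integers, so the variable
`x_0` is never used. -/

/-- A proper coloring of `G` by positive integers. -/
def IsProperColoring {V : Type*} (G : SimpleGraph V) (f : V → ℕ) : Prop :=
  (∀ v, 0 < f v) ∧ ∀ u v, G.Adj u v → f u ≠ f v

/-- The coefficient of the monomial `∏ i, x_i ^ μ i` in the chromatic symmetric
function `X_G = ∑_{proper colorings f} ∏_{v} x_{f v}`. -/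
noncomputable def XCoeff {V : Type*} [Fintype V] (G : SimpleGraph V) (μ : ℕ → ℕ) : ℚ :=
  Nat.card {f : V → ℕ //
    IsProperColoring G f ∧ ∀ i, Nat.card {v : V // f v = i} = μ i}

/-- A semistandard Young tableau of shape `lam`: positive entries on the diagram
(normalized to `0` off the diagram), weakly increasing along rows, strictly
increasing down columns. -/
def IsSSYT {N : ℕ} (lam : Nat.Partition N) (t : Cell → ℕ) : Prop :=
  (∀ c, c ∉ diag lam → t c = 0) ∧ (∀ c ∈ diag lam, 0 < t c) ∧
  (∀ i j : ℕ, ((i, j + 1) : Cell) ∈ diag lam → t (i, j) ≤ t (i, j + 1)) ∧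
  (∀ i j : ℕ, ((i + 1, j) : Cell) ∈ diag lam → t (i, j) < t (i + 1, j))

/-- The coefficient of the monomial `∏ i, x_i ^ μ i` in the Schur function `s_lam`,
i.e. the number of SSYT of shape `lam` and weight `μ`. -/
noncomputable def schurFn {N : ℕ} (lam : Nat.Partition N) (μ : ℕ → ℕ) : ℚ :=
  Nat.card {t : Cell → ℕ // IsSSYT lam t ∧
    ∀ i, Nat.card {c : Cell // c ∈ diag lam ∧ t c = i} = μ i}

/-- The coefficient `[s_lam] f` of the Schur function `s_lam` in the (unique, when it
exists) expansion `f = ∑_{ν ⊢ N} c_ν s_ν` of a symmetric function `f`, homogeneous of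
degree `N`, given by its monomial coefficients. -/
noncomputable def sCoeff {N : ℕ} (f : (ℕ → ℕ) → ℚ) (lam : Nat.Partition N) : ℚ :=
  if h : ∃ c : Nat.Partition N →₀ ℚ, ∀ μ, f μ = c.sum fun ν a => a * schurFn ν μ
  then h.choose lam else 0

/-! ### Graphs: generalized nets, generalized spiders, disjoint unions -/

/-- The generalized net `GN_{n,m}`: the complete graph on the body `Fin n`, with a
pendant (`Sum.inr j`) attached to the anchor `Sum.inl j` for each `j : Fin m`. -/
def genNet (n m : ℕ) : SimpleGraph (Fin n ⊕ Fin m) :=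
  SimpleGraph.fromRel fun a b =>
    match a, b with
    | Sum.inl _, Sum.inl _ => True
    | Sum.inl i, Sum.inr j => (i : ℕ) = (j : ℕ)
    | Sum.inr _, _ => False

/-- The generalized spider `GS_{n,(2,1^{m-1})}`: the complete graph on the body
`Fin n`, a pendant `Sum.inr (Sum.inl j)` attached to the body vertex `Sum.inl j` for
each `j : Fin m`, and one extra vertex `Sum.inr (Sum.inr 0)` (the special pendant)
attached to the pendant `Sum.inr (Sum.inl 0)`, so that the body vertex `0` (the
special anchor) carries an attached path on two vertices. -/
def genSpider2 (n m : ℕ) : SimpleGraph (Fin n ⊕ (Fin m ⊕ Fin 1)) :=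
  SimpleGraph.fromRel fun a b =>
    match a, b with
    | Sum.inl _, Sum.inl _ => True
    | Sum.inl i, Sum.inr (Sum.inl j) => (i : ℕ) = (j : ℕ)
    | Sum.inr (Sum.inl j), Sum.inr (Sum.inr _) => (j : ℕ) = 0
    | _, _ => False

/-- Disjoint union of two simple graphs. -/
def disjUnion {α β : Type*} (G : SimpleGraph α) (H : SimpleGraph β) :
    SimpleGraph (α ⊕ β) :=
  SimpleGraph.fromRel fun a b =>
    match a, b with
    | Sum.inl a, Sum.inl b => G.Adj a b
    | Sum.inr a, Sum.inr b => H.Adj a b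
    | _, _ => False

/-- The one-vertex graph `K_1`. -/
def K1 : SimpleGraph (Fin 1) := ⊥

/-- The path (= complete graph) on two vertices `P_2`. -/
def P2 : SimpleGraph (Fin 2) := ⊤

/-! ### Operations on partitions -/

/-- `removeOnes lam t` is the partition `lam ∖ 1^t` obtained by deleting `t` parts
equal to `1` from `lam` (junk value if `lam` has fewer than `t` parts equal to `1`). -/
def removeOnes {N : ℕ} (lam : Nat.Partition N) (t : ℕ) : Nat.Partition (N - t) :=
  if h : Multiset.replicate t 1 ≤ lam.parts then
    { parts := lam.parts - Multiset.replicate t 1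
      parts_pos := fun hx =>
        lam.parts_pos (Multiset.mem_of_le (tsub_le_self) hx)
      parts_sum := by
        have h1 : (lam.parts - Multiset.replicate t 1) + Multiset.replicate t 1
            = lam.parts := tsub_add_cancel_of_le h
        have h2 := congrArg Multiset.sum h1
        rw [Multiset.sum_add, Multiset.sum_replicate, lam.parts_sum] at h2
        simp only [smul_eq_mul, mul_one] at h2
        omega }
  else Nat.Partition.indiscrete (N - t)

/-- The partition `(2^a, 1^b)` of `2*a + b`. -/
def twoOne (a b : ℕ) : Nat.Partition (2 * a + b) where
  parts := Multiset.replicate a 2 + Multiset.replicate b 1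
  parts_pos := by
    intro i hi
    rw [Multiset.mem_add] at hi
    rcases hi with hi | hi <;> · rw [Multiset.eq_of_mem_replicate hi]; omega
  parts_sum := by
    rw [Multiset.sum_add, Multiset.sum_replicate, Multiset.sum_replicate]
    simp only [smul_eq_mul, mul_one]
    omega

/-! ### Special rim hook `G`-tabloids -/

/-- Two cells are adjacent if they share an edge. -/
def cellAdj (c d : Cell) : Prop :=
  (c.1 = d.1 ∧ (c.2 + 1 = d.2 ∨ d.2 + 1 = c.2)) ∨
  (c.2 = d.2 ∧ (c.1 + 1 = d.1 ∨ d.1 + 1 = c.1))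

/-- A set of cells is (the diagram of) a Young diagram if it is closed under
decreasing either coordinate. -/
def IsYoungDiag (D : Set Cell) : Prop :=
  ∀ i j i' j' : ℕ, ((i, j) : Cell) ∈ D → i' ≤ i → j' ≤ j → ((i', j') : Cell) ∈ D

/-- A set of cells is connected (via edge-adjacency, within the set). -/
def CellConnected (S : Set Cell) : Prop :=
  ∀ c ∈ S, ∀ d ∈ S, Relation.ReflTransGen (fun a b => a ∈ S ∧ b ∈ S ∧ cellAdj a b) c d

/-- A border strip (= rim hook, as a set of cells): nonempty, connected, and
containing no 2×2 square of cells. -/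
def IsBorderStrip (H : Set Cell) : Prop :=
  H.Nonempty ∧ CellConnected H ∧
    ∀ i j : ℕ, ¬(((i, j) : Cell) ∈ H ∧ ((i + 1, j) : Cell) ∈ H ∧
      ((i, j + 1) : Cell) ∈ H ∧ ((i + 1, j + 1) : Cell) ∈ H)

/-- `H` is a rim hook of the Young diagram `D`: a border strip contained in `D`
whose removal leaves a Young diagram. -/
def IsRimHookOf (D H : Set Cell) : Prop :=
  H ⊆ D ∧ IsBorderStrip H ∧ IsYoungDiag (D \ H)

/-- `IsRemovalSeq L D` says that the sets of cells in the list `L` may be removed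
successively from the diagram `D`, each being a rim hook of what remains, with
nothing left at the end. -/
def IsRemovalSeq : List (Set Cell) → Set Cell → Prop
  | [], D => D = ∅
  | H :: L, D => IsRimHookOf D H ∧ IsRemovalSeq L (D \ H)

/-- A special rim hook `G`-tabloid of shape `lam`, with respect to an order `r` on
the vertices of `G`: the cells of the diagram of `lam` are filled bijectively with
the vertices of `G` (vertex `v` goes in cell `pos v`), and the diagram is tiled by
rim hooks, successively removable, each meeting the first column.  The rim hooks are
recorded by the labelling `hk`, which assigns to each vertex the topmost row in which
its rim hook meets the first column.  The vertices in each rim hook form a stable set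
of `G` and, read from the rim hook's (bottom) cell in the first column — i.e. in
increasing order of the diagonal index `column − row` — they increase with respect
to `r`. -/
structure SRHGTabloid {V : Type*} (G : SimpleGraph V) (r : V → V → Prop)
    {N : ℕ} (lam : Nat.Partition N) where
  /-- the cell occupied by each vertex -/
  pos : V → Cell
  /-- the label of the rim hook containing each vertex: the topmost row in which
  that rim hook meets the first column -/
  hk : V → ℕ
  pos_inj : Function.Injective pos
  pos_range : Set.range pos = diag lam
  hk_mem : ∀ v, ((hk v, 0) : Cell) ∈ pos '' {u | hk u = hk v}
  hk_min : ∀ v i, ((i, 0) : Cell) ∈ pos '' {u | hk u = hk v} → hk v ≤ i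
  removal : ∃ L : List ℕ, L.Nodup ∧ (∀ i, i ∈ L ↔ ∃ v, hk v = i) ∧
    IsRemovalSeq (L.map fun i => pos '' {u | hk u = i}) (diag lam)
  stable : ∀ u v, hk u = hk v → u ≠ v → ¬G.Adj u v
  increasing : ∀ u v, hk u = hk v →
    ((pos u).2 : ℤ) - ((pos u).1 : ℤ) < ((pos v).2 : ℤ) - ((pos v).1 : ℤ) → r u v

/-- The sign of a special rim hook `G`-tabloid: `(-1)` to the total number of north
steps, where a rim hook spanning `k` rows contributes `k - 1` north steps. -/
noncomputable def tabSign {V : Type*} {G : SimpleGraph V} {r : V → V → Prop}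
    {N : ℕ} {lam : Nat.Partition N} (T : SRHGTabloid G r lam) : ℤ :=
  (-1) ^ ∑ i ∈ Finset.range N,
    ({a : ℕ | ∃ v, T.hk v = i ∧ (T.pos v).1 = a}.ncard - 1)

/-- The cells of the head of a tabloid of shape `lam`: the rows of length `≥ 2`. -/
def headCells {N : ℕ} (lam : Nat.Partition N) : Set Cell :=
  {c : Cell | c ∈ diag lam ∧ 2 ≤ rowLen lam c.1}

/-- The cells of the tail of a tabloid of shape `lam`: the rows of length `1`. -/
def tailCells {N : ℕ} (lam : Nat.Partition N) : Set Cell :=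
  {c : Cell | c ∈ diag lam ∧ rowLen lam c.1 = 1}

/-- Two special rim hook `G`-tabloids have the same head: the same cells of the head
are occupied by the same vertices, and the rim hook structure restricted to the head
agrees. -/
def SameHead {V : Type*} {G : SimpleGraph V} {r : V → V → Prop} {N : ℕ}
    {lam : Nat.Partition N} (T T' : SRHGTabloid G r lam) : Prop :=
  (∀ v, T.pos v ∈ headCells lam ↔ T'.pos v ∈ headCells lam) ∧
  (∀ v, T.pos v ∈ headCells lam → T.pos v = T'.pos v) ∧
  (∀ u v, T.pos u ∈ headCells lam → T.pos v ∈ headCells lam →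
    (T.hk u = T.hk v ↔ T'.hk u = T'.hk v))


/-! ## Shapes as finitely supported functions -/

noncomputable def mkF (f : ℕ → ℕ) : ℕ →₀ ℕ :=
  if h : (Function.support f).Finite then Finsupp.ofSupportFinite f h else 0

lemma mkF_apply (f : ℕ → ℕ) (n : ℕ) (h : ∀ j, n ≤ j → f j = 0) (j : ℕ) : mkF f j = f j := by
  have hf : (Function.support f).Finite := by
    apply (Set.finite_lt_nat n).subset
    intro j hj
    by_contra hc
    exact hj (h j (by simpa using hc))
  unfold mkF
  rw [dif_pos hf]
  rfl

lemma shp_bound (ν : ℕ →₀ ℕ) : ∃ n, ∀ j, n ≤ j → ν j = 0 := by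
  refine ⟨ν.support.sup id + 1, fun j hj => ?_⟩
  by_contra hc
  have := Finset.le_sup (f := id) (Finsupp.mem_support_iff.mpr hc)
  simp at this
  omega

noncomputable def deg (ν : ℕ →₀ ℕ) : ℕ := ν.sum fun _ a => a

lemma deg_eq (ν : ℕ →₀ ℕ) (n : ℕ) (h : ∀ j, n ≤ j → ν j = 0) :
    deg ν = ∑ j ∈ Finset.range n, ν j := by
  unfold deg
  rw [Finsupp.sum_of_support_subset (s := Finset.range n)]
  · intro j hj
    rw [Finsupp.mem_support_iff] at hj
    by_contra hc
    exact hj (h j (by simpa using hc))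
  · simp

lemma deg_zero : deg 0 = 0 := by simp [deg]

lemma eq_zero_of_deg (ν : ℕ →₀ ℕ) (h : deg ν = 0) : ν = 0 := by
  obtain ⟨n, hn⟩ := shp_bound ν
  rw [deg_eq ν n hn, Finset.sum_eq_zero_iff] at h
  ext j
  by_cases hj : j < n
  · simpa using h j (by simpa using hj)
  · simpa using hn j (by omega)

lemma eq_of_le_of_deg (κ ν : ℕ →₀ ℕ) (h : ∀ j, κ j ≤ ν j) (hd : deg κ = deg ν) : κ = ν := by
  obtain ⟨n, hn⟩ := shp_bound ν
  have hn' : ∀ j, n ≤ j → κ j = 0 := fun j hj => by have := h j; have := hn j hj; omega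
  rw [deg_eq ν n hn, deg_eq κ n hn'] at hd
  rw [Finset.sum_eq_sum_iff_of_le (fun i _ => h i)] at hd
  ext j
  by_cases hj : j < n
  · exact hd j (by simpa using hj)
  · rw [hn j (by omega), hn' j (by omega)]

noncomputable def shShift (ν : ℕ →₀ ℕ) : ℕ →₀ ℕ :=
  ν.comapDomain (· + 1) (fun a _ b _ h => by simpa using h)

lemma shShift_apply (ν : ℕ →₀ ℕ) (j : ℕ) : shShift ν j = ν (j + 1) := rfl

noncomputable def hstrips (ν : ℕ →₀ ℕ) (k : ℕ) : Finset (ℕ →₀ ℕ) :=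
  (Finset.Icc (shShift ν) ν).filter fun κ => deg κ + k = deg ν

lemma mem_hstrips (ν κ : ℕ →₀ ℕ) (k : ℕ) :
    κ ∈ hstrips ν k ↔ (∀ j, ν (j + 1) ≤ κ j ∧ κ j ≤ ν j) ∧ deg κ + k = deg ν := by
  unfold hstrips
  rw [Finset.mem_filter, Finset.mem_Icc, Finsupp.le_def, Finsupp.le_def]
  simp only [shShift_apply, forall_and]

lemma hstrips_antitone {ν κ : ℕ →₀ ℕ} {k : ℕ} (h : κ ∈ hstrips ν k) : Antitone κ := by
  rw [mem_hstrips] at h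
  exact antitone_nat_of_succ_le fun j => le_trans (h.1 (j + 1)).2 (h.1 j).1

/-- Kostka numbers, by removing horizontal strips. -/
noncomputable def KK : List ℕ → (ℕ →₀ ℕ) → ℚ
  | [], ν => if ν = 0 then 1 else 0
  | k :: l, ν => ∑ κ ∈ hstrips ν k, KK l κ

lemma KK_deg (l : List ℕ) : ∀ ν, KK l ν ≠ 0 → l.sum = deg ν := by
  induction l with
  | nil => intro ν h; simp [KK] at h; simp [h, deg_zero]
  | cons k l ih =>
    intro ν h
    obtain ⟨κ, hκ, h2⟩ := Finset.exists_ne_zero_of_sum_ne_zero h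
    have := ih κ h2
    rw [mem_hstrips] at hκ
    simp; omega

lemma KK_zero_cons (l : List ℕ) (ν : ℕ →₀ ℕ) (hν : Antitone ν) : KK (0 :: l) ν = KK l ν := by
  have : hstrips ν 0 = {ν} := by
    ext κ
    rw [mem_hstrips, Finset.mem_singleton]
    constructor
    · rintro ⟨h1, h2⟩
      exact eq_of_le_of_deg κ ν (fun j => (h1 j).2) (by simpa using h2)
    · rintro rfl
      exact ⟨fun j => ⟨hν (Nat.le_succ j), le_rfl⟩, by simp⟩
  simp [KK, this]

lemma KK_filter (l : List ℕ) : ∀ ν : ℕ →₀ ℕ, Antitone ν →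
    KK (l.filter (· ≠ 0)) ν = KK l ν := by
  induction l with
  | nil => intros; rfl
  | cons k l ih =>
    intro ν hν
    by_cases hk : k = 0
    · subst hk
      rw [KK_zero_cons _ _ hν]
      simpa using ih ν hν
    · rw [List.filter_cons_of_pos (by simpa using hk)]
      exact Finset.sum_congr rfl fun κ hκ => ih κ (hstrips_antitone hκ)

def bkhi (ν ρ : ℕ →₀ ℕ) : ℕ → ℕ
  | 0 => ν 0
  | j + 1 => min (ν (j + 1)) (ρ j)

def bklo (ν ρ : ℕ →₀ ℕ) (j : ℕ) : ℕ := max (ρ j) (ν (j + 1))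

noncomputable def bkF (ν ρ κ : ℕ →₀ ℕ) : ℕ →₀ ℕ :=
  mkF fun j => bklo ν ρ j + bkhi ν ρ j - κ j

lemma bkF_spec {ν ρ κ : ℕ →₀ ℕ} (h1 : ∀ j, ν (j + 1) ≤ κ j ∧ κ j ≤ ν j)
    (h2 : ∀ j, κ (j + 1) ≤ ρ j ∧ ρ j ≤ κ j) :
    (∀ j, bkF ν ρ κ j + κ j = bklo ν ρ j + bkhi ν ρ j) ∧
    (∀ j, bklo ν ρ j ≤ bkF ν ρ κ j ∧ bkF ν ρ κ j ≤ bkhi ν ρ j) ∧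
    deg (bkF ν ρ κ) + deg κ = deg ν + deg ρ := by
  obtain ⟨n, hn⟩ := shp_bound ν
  have hκ : ∀ j, n ≤ j → κ j = 0 := fun j hj => by have := h1 j; have := hn j hj; omega
  have hρ : ∀ j, n ≤ j → ρ j = 0 := fun j hj => by have := h2 j; have := hκ j hj; omega
  have hlo : ∀ j, bklo ν ρ j ≤ κ j := fun j => by
    have := h1 j; have := h2 j; unfold bklo; omega
  have hhi : ∀ j, κ j ≤ bkhi ν ρ j := fun j => by
    cases j with
    | zero => exact (h1 0).2
    | succ j => have := h1 (j + 1); have := h2 j; simp only [bkhi]; omega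
  have hhz : ∀ j, n ≤ j → bkhi ν ρ j = 0 := fun j hj => by
    have := hn j hj
    cases j with
    | zero => exact this
    | succ j => simp only [bkhi]; omega
  have hap : ∀ j, bkF ν ρ κ j = bklo ν ρ j + bkhi ν ρ j - κ j := by
    intro j
    unfold bkF
    refine mkF_apply _ n (fun j hj => ?_) j
    have := hlo j; have := hhz j hj; have := hκ j hj
    omega
  have hsum : ∀ j, bkF ν ρ κ j + κ j = bklo ν ρ j + bkhi ν ρ j := fun j => by
    have := hap j; have := hhi j; omega
  refine ⟨hsum, fun j => ?_, ?_⟩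
  · have := hap j; have := hlo j; have := hhi j; omega
  · have hb : ∀ j, n + 1 ≤ j → bkF ν ρ κ j = 0 := fun j hj => by
      have := hap j; have := hlo j; have := hhz j (by omega); have := hκ j (by omega); omega
    rw [deg_eq _ (n + 1) hb, deg_eq κ (n + 1) (fun j hj => hκ j (by omega)),
      ← Finset.sum_add_distrib, Finset.sum_congr rfl (fun j _ => hsum j),
      Finset.sum_add_distrib, Finset.sum_range_succ' (bkhi ν ρ), deg_eq ν (n + 1 + 1)
        (fun j hj => hn j (by omega)), Finset.sum_range_succ' ν, deg_eq ρ (n + 1)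
        (fun j hj => hρ j (by omega)), Finset.sum_range_succ (bklo ν ρ),
        Finset.sum_range_succ ρ, Finset.sum_range_succ _ n]
    have : ∑ x ∈ Finset.range n, bklo ν ρ x + ∑ k ∈ Finset.range n, bkhi ν ρ (k + 1)
        = ∑ k ∈ Finset.range n, ν (k + 1) + ∑ x ∈ Finset.range n, ρ x := by
      rw [← Finset.sum_add_distrib, ← Finset.sum_add_distrib]
      refine Finset.sum_congr rfl fun j _ => ?_
      simp only [bklo, bkhi]; omega
    have e1 : bklo ν ρ n = 0 := by
      unfold bklo; rw [hρ n le_rfl, hn (n + 1) (by omega)]; rfl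
    have e2 : bkhi ν ρ 0 = ν 0 := rfl
    have e3 := hρ n le_rfl
    have e4 := hn (n + 1) (by omega)
    omega

lemma KK_swap (k m : ℕ) (l : List ℕ) (ν : ℕ →₀ ℕ) : KK (k :: m :: l) ν = KK (m :: k :: l) ν := by
  simp only [KK]
  rw [Finset.sum_sigma', Finset.sum_sigma']
  have key : ∀ k m : ℕ, ∀ a ∈ (hstrips ν k).sigma fun κ => hstrips κ m,
      (⟨bkF ν a.2 a.1, a.2⟩ : Σ _ : ℕ →₀ ℕ, ℕ →₀ ℕ) ∈ (hstrips ν m).sigma fun κ => hstrips κ k := by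
    rintro k m ⟨κ, ρ⟩ h
    simp only [Finset.mem_sigma, mem_hstrips] at h ⊢
    obtain ⟨⟨h1, d1⟩, h2, d2⟩ := h
    obtain ⟨s1, s2, s3⟩ := bkF_spec h1 h2
    refine ⟨⟨fun j => ?_, by omega⟩, fun j => ?_, by omega⟩
    · have := s2 j
      cases j with
      | zero => simp only [bklo, bkhi] at this; omega
      | succ j => simp only [bklo, bkhi] at this; omega
    · have a := s2 j
      have b := s2 (j + 1)
      simp only [bklo, bkhi] at a b
      omega
  have inv : ∀ k m : ℕ, ∀ a ∈ (hstrips ν k).sigma fun κ => hstrips κ m,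
      (⟨bkF ν a.2 (bkF ν a.2 a.1), a.2⟩ : Σ _ : ℕ →₀ ℕ, ℕ →₀ ℕ) = a := by
    rintro k m ⟨κ, ρ⟩ h
    have h' := key k m _ h
    simp only [Finset.mem_sigma, mem_hstrips] at h h'
    obtain ⟨s1, -, -⟩ := bkF_spec h.1.1 h.2.1
    obtain ⟨t1, -, -⟩ := bkF_spec h'.1.1 h'.2.1
    have : bkF ν ρ (bkF ν ρ κ) = κ := by
      ext j
      have := s1 j; have := t1 j; omega
    simp only [this]
  refine Finset.sum_bij' (fun a _ => ⟨bkF ν a.2 a.1, a.2⟩) (fun a _ => ⟨bkF ν a.2 a.1, a.2⟩)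
    (key k m) (key m k) (inv k m) (inv m k) (fun _ _ => rfl)

lemma KK_perm {l l' : List ℕ} (h : l.Perm l') : ∀ ν, KK l ν = KK l' ν := by
  induction h with
  | nil => intro; rfl
  | cons k _ ih => intro ν; exact Finset.sum_congr rfl fun κ _ => ih κ
  | swap k m l => intro ν; exact KK_swap _ _ _ _
  | trans _ _ h1 h2 => intro ν; rw [h1, h2]


/-! ## Removing special rim hooks, and the inverse Kostka functional -/

/-- number of rows -/
def len (ν : ℕ →₀ ℕ) : ℕ := ν.support.card

lemma lt_len_iff {ν : ℕ →₀ ℕ} (hν : Antitone ν) (j : ℕ) : j < len ν ↔ 0 < ν j := by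
  have hs : ∃ n, ν.support = Finset.range n := by
    have hex : ∃ n, ν n = 0 := by
      obtain ⟨n, hn⟩ := shp_bound ν
      exact ⟨n, hn n le_rfl⟩
    refine ⟨Nat.find hex, ?_⟩
    ext j
    rw [Finsupp.mem_support_iff, Finset.mem_range]
    constructor
    · intro h
      by_contra hc
      have h1 := hν (not_lt.mp hc)
      rw [Nat.find_spec hex] at h1
      omega
    · intro h
      exact Nat.find_min hex h
  obtain ⟨n, hn⟩ := hs
  have : len ν = n := by unfold len; rw [hn, Finset.card_range]
  rw [this, ← Finset.mem_range, ← hn, Finsupp.mem_support_iff]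
  omega

lemma eq_zero_of_len_le {ν : ℕ →₀ ℕ} (hν : Antitone ν) {j : ℕ} (h : len ν ≤ j) : ν j = 0 := by
  have := lt_len_iff hν j; omega

lemma len_pos {ν : ℕ →₀ ℕ} (h : ν ≠ 0) : 0 < len ν := by
  unfold len
  rw [Finset.card_pos, Finsupp.support_nonempty_iff]
  exact h

/-- remove the special rim hook that starts at the bottom-left cell and ends in row `i` -/
noncomputable def rem (ν : ℕ →₀ ℕ) (i : ℕ) : ℕ →₀ ℕ :=
  mkF fun j => if j < i then ν j else ν (j + 1) - 1

lemma rem_apply (ν : ℕ →₀ ℕ) (i j : ℕ) :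
    rem ν i j = if j < i then ν j else ν (j + 1) - 1 := by
  obtain ⟨n, hn⟩ := shp_bound ν
  refine mkF_apply _ n (fun j hj => ?_) j
  have := hn j hj
  have := hn (j + 1) (by omega)
  split_ifs <;> omega

/-- length of that rim hook -/
def hlen (ν : ℕ →₀ ℕ) (i : ℕ) : ℕ := ν i + (len ν - 1 - i)

lemma rem_antitone {ν : ℕ →₀ ℕ} (hν : Antitone ν) (i : ℕ) : Antitone (rem ν i) := by
  refine antitone_nat_of_succ_le fun j => ?_
  rw [rem_apply, rem_apply]
  have h1 := hν (Nat.le_succ j)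
  have h2 := hν (Nat.le_succ (j + 1))
  simp only [Nat.succ_eq_add_one] at h1 h2
  split_ifs <;> omega

lemma rem_deg {ν : ℕ →₀ ℕ} (hν : Antitone ν) {i : ℕ} (hi : i < len ν) :
    deg (rem ν i) + hlen ν i = deg ν := by
  have key : ∀ n, i ≤ n → n < len ν →
      ∑ j ∈ Finset.range n, rem ν i j + (ν i + (n - i)) = ∑ j ∈ Finset.range (n + 1), ν j := by
    intro n hn
    induction n, hn using Nat.le_induction with
    | base =>
      intro _
      rw [Finset.sum_range_succ]
      have : ∑ j ∈ Finset.range i, rem ν i j = ∑ j ∈ Finset.range i, ν j :=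
        Finset.sum_congr rfl fun j hj => by
          rw [rem_apply, if_pos (by simpa using hj)]
      omega
    | succ n hn ih =>
      intro h
      have := ih (by omega)
      have h0 := (lt_len_iff hν _).mp h
      rw [Finset.sum_range_succ _ (n + 1), ← this, Finset.sum_range_succ, rem_apply ν i n,
        if_neg (by omega)]
      omega
  have := key (len ν - 1) (by omega) (by omega)
  rw [deg_eq (rem ν i) (len ν - 1), deg_eq ν (len ν - 1 + 1)]
  · exact this
  · intro j hj; exact eq_zero_of_len_le hν (by omega)
  · intro j hj
    rw [rem_apply]
    have h1 : ν (j + 1) = 0 := eq_zero_of_len_le hν (by omega)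
    split_ifs with h
    · omega
    · omega

lemma hlen_pos {ν : ℕ →₀ ℕ} (hν : Antitone ν) {i : ℕ} (hi : i < len ν) : 0 < hlen ν i := by
  have := (lt_len_iff hν i).mp hi
  unfold hlen; omega

noncomputable def JJ : ℕ → (ℕ →₀ ℕ) → (List ℕ → ℚ) → ℚ
  | 0, _, f => f []
  | n + 1, ν, f => if ν = 0 then f [] else
      ∑ i ∈ Finset.range (len ν), (-1) ^ (len ν - 1 - i) *
        JJ n (rem ν i) (fun l => f (hlen ν i :: l))

lemma JJ_sum {α : Type*} (s : Finset α) (c : α → ℚ) (n : ℕ) : ∀ (ν : ℕ →₀ ℕ)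
    (f : α → List ℕ → ℚ),
    JJ n ν (fun l => ∑ a ∈ s, c a * f a l) = ∑ a ∈ s, c a * JJ n ν (f a) := by
  induction n with
  | zero => intros; rfl
  | succ n ih =>
    intro ν f
    simp only [JJ]
    split_ifs with h
    · rfl
    · simp only [ih _ (fun a l => f a (_ :: l)), Finset.mul_sum]
      rw [Finset.sum_comm]
      refine Finset.sum_congr rfl fun a _ => Finset.sum_congr rfl fun i _ => ?_
      ring

lemma JJ_sum' {α : Type*} (s : Finset α) (n : ℕ) (ν : ℕ →₀ ℕ)
    (f : α → List ℕ → ℚ) :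
    JJ n ν (fun l => ∑ a ∈ s, f a l) = ∑ a ∈ s, JJ n ν (f a) := by
  have := JJ_sum s (fun _ => 1) n ν f
  simpa using this

lemma JJ_congr (n : ℕ) : ∀ (ν : ℕ →₀ ℕ) (f g : List ℕ → ℚ), Antitone ν → deg ν ≤ n →
    (∀ l : List ℕ, l.sum = deg ν → f l = g l) → JJ n ν f = JJ n ν g := by
  induction n with
  | zero =>
    intro ν f g _ h hfg
    exact hfg [] (by simp; omega)
  | succ n ih =>
    intro ν f g hν h hfg
    simp only [JJ]
    split_ifs with h0
    · exact hfg [] (by simp [h0, deg_zero])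
    · refine Finset.sum_congr rfl fun i hi => ?_
      have hi' := Finset.mem_range.mp hi
      have hd := rem_deg hν hi'
      have hp := hlen_pos hν hi'
      rw [ih (rem ν i) _ (fun l => g (hlen ν i :: l)) (rem_antitone hν i) (by omega)]
      intro l hl
      exact hfg _ (by simp; omega)

lemma hook_sign_sum {lam ν : ℕ →₀ ℕ} (hl : Antitone lam) (h0 : lam ≠ 0) (hd : deg ν = deg lam) :
    ∑ i ∈ Finset.range (len lam), (-1 : ℚ) ^ (len lam - 1 - i) *
      (if (∀ j, ν (j + 1) ≤ rem lam i j ∧ rem lam i j ≤ ν j) then 1 else 0) =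
    if ν = lam then 1 else 0 := by
  have hpos := len_pos h0
  by_cases he : ν = lam
  · subst he
    rw [if_pos rfl, Finset.sum_eq_single_of_mem (len ν - 1) (by simp; omega)]
    · rw [if_pos]
      · simp
      intro j
      rw [rem_apply]
      have h1 := hl (Nat.le_succ j)
      simp only [Nat.succ_eq_add_one] at h1
      split_ifs with h
      · omega
      · have := eq_zero_of_len_le hl (j := j + 1) (by omega)
        omega
    · intro i hi hne
      rw [if_neg, mul_zero]
      intro hv
      have := (hv i).1
      rw [rem_apply, if_neg (by omega)] at this
      have hh := (lt_len_iff hl (i + 1)).mp (by simp at hi; omega)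
      omega
  · rw [if_neg he]
    simp only [mul_ite, mul_one, mul_zero]
    rw [← Finset.sum_filter]
    -- the valid indices
    have mono1 : ∀ j, lam (j + 1) ≤ lam j := fun j => hl (Nat.le_succ j)
    have up : ∀ i, i < len lam → (∀ j, ν (j + 1) ≤ rem lam i j ∧ rem lam i j ≤ ν j) →
        lam i ≤ ν i → i + 1 < len lam ∧
          (∀ j, ν (j + 1) ≤ rem lam (i + 1) j ∧ rem lam (i + 1) j ≤ ν j) ∧
          ν (i + 1) < lam (i + 1) := by
      intro i hi hv hle
      by_cases hlast : i + 1 < len lam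
      · have hp := (lt_len_iff hl (i + 1)).mp hlast
        refine ⟨hlast, fun j => ?_, ?_⟩
        · have a := hv j
          rw [rem_apply] at a ⊢
          have m := mono1 j
          by_cases hji : j = i
          · subst hji
            simp at a ⊢; omega
          · split_ifs at a ⊢ <;> omega
        · have a := hv i
          rw [rem_apply, if_neg (by omega)] at a
          omega
      · exfalso
        apply he
        symm
        refine eq_of_le_of_deg _ _ (fun j => ?_) hd.symm
        rcases lt_trichotomy j i with h | h | h
        · have a := (hv j).2
          rwa [rem_apply, if_pos h] at a
        · rwa [h]
        · rw [eq_zero_of_len_le hl (j := j) (by omega)]; omega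
    have down : ∀ i, i < len lam → (∀ j, ν (j + 1) ≤ rem lam i j ∧ rem lam i j ≤ ν j) →
        ν i < lam i → 0 < i ∧
          (∀ j, ν (j + 1) ≤ rem lam (i - 1) j ∧ rem lam (i - 1) j ≤ ν j) ∧
          lam (i - 1) ≤ ν (i - 1) := by
      intro i hi hv hlt
      cases i with
      | zero =>
        exfalso
        apply he
        refine eq_of_le_of_deg _ _ (fun j => ?_) hd
        cases j with
        | zero => omega
        | succ j =>
          have a := (hv j).1
          rw [rem_apply, if_neg (by omega)] at a
          omega
      | succ i =>
        simp only [Nat.add_sub_cancel]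
        have b := hv i
        rw [rem_apply, if_pos (by omega)] at b
        refine ⟨by omega, fun j => ?_, b.2⟩
        have a := hv j
        rw [rem_apply] at a ⊢
        have m := mono1 j
        by_cases hji : j = i
        · subst hji
          simp at a ⊢; omega
        · split_ifs at a ⊢ <;> omega
    refine Finset.sum_involution (fun i _ => if lam i ≤ ν i then i + 1 else i - 1) ?_ ?_ ?_ ?_
    · intro i hi
      simp only [Finset.mem_filter, Finset.mem_range] at hi
      split_ifs with h
      · have := up i hi.1 hi.2 h
        obtain ⟨m, hm⟩ : ∃ m, len lam = i + 2 + m := ⟨len lam - (i + 2), by omega⟩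
        rw [show len lam - 1 - i = m + 1 by omega, show len lam - 1 - (i + 1) = m by omega]
        ring
      · have := down i hi.1 hi.2 (by omega)
        obtain ⟨m, hm⟩ : ∃ m, len lam = i + 1 + m := ⟨len lam - (i + 1), by omega⟩
        rw [show len lam - 1 - i = m by omega, show len lam - 1 - (i - 1) = m + 1 by omega]
        ring
    · intro i hi _
      simp only [Finset.mem_filter, Finset.mem_range] at hi
      split_ifs with h
      · omega
      · have := down i hi.1 hi.2 (by omega)
        omega
    · intro i hi
      simp only [Finset.mem_filter, Finset.mem_range] at hi ⊢
      split_ifs with h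
      · have := up i hi.1 hi.2 h
        exact ⟨this.1, this.2.1⟩
      · have := down i hi.1 hi.2 (by omega)
        exact ⟨by omega, this.2.1⟩
    · intro i hi
      simp only [Finset.mem_filter, Finset.mem_range] at hi
      by_cases h : lam i ≤ ν i
      · have := up i hi.1 hi.2 h
        simp only [if_pos h]
        rw [if_neg (by omega)]
        omega
      · have := down i hi.1 hi.2 (by omega)
        simp only [if_neg h]
        rw [if_pos this.2.2]
        omega

lemma JJ_KK (n : ℕ) : ∀ lam ν : ℕ →₀ ℕ, Antitone lam → deg lam ≤ n → deg ν = deg lam →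
    JJ n lam (fun l => KK l ν) = if ν = lam then 1 else 0 := by
  induction n with
  | zero =>
    intro lam ν _ h1 h2
    have e1 := eq_zero_of_deg lam (by omega)
    have e2 := eq_zero_of_deg ν (by omega)
    simp [JJ, KK, e1, e2]
  | succ n ih =>
    intro lam ν hl h1 h2
    by_cases h0 : lam = 0
    · subst h0
      simp [JJ, KK]
    · simp only [JJ, if_neg h0]
      rw [← hook_sign_sum hl h0 h2]
      refine Finset.sum_congr rfl fun i hi => ?_
      have hi' := Finset.mem_range.mp hi
      have hd := rem_deg hl hi'
      have hp := hlen_pos hl hi'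
      congr 1
      simp only [KK]
      rw [JJ_sum']
      have : ∀ κ ∈ hstrips ν (hlen lam i), JJ n (rem lam i) (fun l => KK l κ) =
          if κ = rem lam i then 1 else 0 := by
        intro κ hκ
        rw [mem_hstrips] at hκ
        exact ih _ _ (rem_antitone hl i) (by omega) (by omega)
      rw [Finset.sum_congr rfl this, Finset.sum_ite_eq']
      refine if_congr ?_ rfl rfl
      rw [mem_hstrips]
      constructor
      · exact fun h => h.1
      · exact fun h => ⟨h, by omega⟩


/-! ## Partitions and existence of expansions -/

lemma list_getD_sum (l : List ℕ) : ∑ i ∈ Finset.range l.length, l.getD i 0 = l.sum := by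
  induction l with
  | nil => simp
  | cons a l ih =>
    rw [List.length_cons, Finset.sum_range_succ']
    simp only [List.getD_cons_succ, List.getD_cons_zero, List.sum_cons, ih]
    omega

lemma list_ext_getD (l l' : List ℕ) (h : ∀ x ∈ l, 0 < x) (h' : ∀ x ∈ l', 0 < x)
    (he : ∀ i, l.getD i 0 = l'.getD i 0) : l = l' := by
  refine List.ext_getElem? fun i => ?_
  have e := he i
  rw [List.getD_eq_getElem?_getD, List.getD_eq_getElem?_getD] at e
  rcases h1 : l[i]? with _ | a <;> rcases h2 : l'[i]? with _ | b
  · rfl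
  · have := h' b (List.mem_of_getElem? h2); simp [h1, h2] at e; omega
  · have := h a (List.mem_of_getElem? h1); simp [h1, h2] at e; omega
  · simp [h1, h2] at e; simp [e]

def plist {N : ℕ} (lam : Nat.Partition N) : List ℕ := (lam.parts.sort (· ≤ ·)).reverse

lemma plist_coe {N : ℕ} (lam : Nat.Partition N) : (plist lam : Multiset ℕ) = lam.parts := by
  unfold plist
  rw [Multiset.coe_reverse, Multiset.sort_eq]

lemma mem_plist {N : ℕ} (lam : Nat.Partition N) (x : ℕ) : x ∈ plist lam ↔ x ∈ lam.parts := by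
  rw [← Multiset.mem_coe, plist_coe]

noncomputable def pF {N : ℕ} (lam : Nat.Partition N) : ℕ →₀ ℕ := mkF (rowLen lam)

lemma rowLen_zero {N : ℕ} (lam : Nat.Partition N) (j : ℕ) (hj : (plist lam).length ≤ j) :
    rowLen lam j = 0 := List.getD_eq_default _ _ hj

lemma pF_apply {N : ℕ} (lam : Nat.Partition N) (j : ℕ) : pF lam j = rowLen lam j :=
  mkF_apply _ _ (rowLen_zero lam) j

lemma pF_deg {N : ℕ} (lam : Nat.Partition N) : deg (pF lam) = N := by
  rw [deg_eq _ (plist lam).length (fun j hj => by rw [pF_apply, rowLen_zero lam j hj])]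
  simp only [pF_apply]
  refine (list_getD_sum (plist lam)).trans ?_
  rw [← Multiset.sum_coe, plist_coe, lam.parts_sum]

lemma pF_inj {N : ℕ} {lam nu : Nat.Partition N} (h : pF lam = pF nu) : lam = nu := by
  have : plist lam = plist nu := by
    refine list_ext_getD _ _ (fun x hx => ?_) (fun x hx => ?_) (fun i => ?_)
    · exact lam.parts_pos ((mem_plist _ _).mp hx)
    · exact nu.parts_pos ((mem_plist _ _).mp hx)
    · have := DFunLike.congr_fun h i
      rwa [pF_apply, pF_apply] at this
  apply Nat.Partition.ext
  rw [← plist_coe, ← plist_coe, this]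

lemma pF_antitone {N : ℕ} (lam : Nat.Partition N) : Antitone (pF lam) := by
  have hp : (plist lam).Pairwise (fun a b => b ≤ a) := by
    unfold plist
    rw [List.pairwise_reverse]
    exact Multiset.pairwise_sort _ _
  refine antitone_nat_of_succ_le fun j => ?_
  rw [pF_apply, pF_apply]
  by_cases hj : j + 1 < (plist lam).length
  · have := List.pairwise_iff_getElem.mp hp j (j + 1) (by omega) hj (by omega)
    change (plist lam).getD (j + 1) 0 ≤ (plist lam).getD j 0
    rw [List.getD_eq_getElem _ _ hj, List.getD_eq_getElem _ _ (by omega)]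
    exact this
  · rw [rowLen_zero lam (j + 1) (by omega)]; omega

def LInv (f : List ℕ → ℚ) : Prop :=
  (∀ l l' : List ℕ, l.Perm l' → f l = f l') ∧ ∀ l : List ℕ, f (l.filter (· ≠ 0)) = f l

lemma LInv_part {N : ℕ} (l : List ℕ) (hl : l.sum = N) :
    ∃ p : Nat.Partition N, ∀ f, LInv f → f l = f p.parts.toList := by
  refine ⟨Nat.Partition.ofSums N (l : Multiset ℕ) (by simpa using hl), fun f hf => ?_⟩
  rw [← hf.2 l]
  apply hf.1
  rw [← Multiset.coe_eq_coe, Multiset.coe_toList]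
  simp [Nat.Partition.ofSums]

lemma KK_LInv {N : ℕ} (ν : Nat.Partition N) : LInv (fun l => KK l (pF ν)) :=
  ⟨fun _ _ h => KK_perm h _, fun l => KK_filter l _ (pF_antitone ν)⟩

lemma sum_LInv {α : Type*} (s : Finset α) (c : α → ℚ) (f : α → List ℕ → ℚ)
    (h : ∀ a, LInv (f a)) : LInv (fun l => ∑ a ∈ s, c a * f a l) := by
  refine ⟨fun l l' hp => ?_, fun l => ?_⟩
  · exact Finset.sum_congr rfl fun a _ => by rw [(h a).1 l l' hp]
  · exact Finset.sum_congr rfl fun a _ => by rw [(h a).2 l]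

lemma coeff_eq {N : ℕ} (c : Nat.Partition N → ℚ) (f : List ℕ → ℚ)
    (h : ∀ l, l.sum = N → f l = ∑ ν, c ν * KK l (pF ν)) (lam : Nat.Partition N) :
    c lam = JJ N (pF lam) f := by
  rw [JJ_congr N (pF lam) f (fun l => ∑ ν, c ν * KK l (pF ν)) (pF_antitone lam)
    (pF_deg lam).le (fun l hl => h l (by rw [hl, pF_deg]))]
  rw [JJ_sum Finset.univ c N (pF lam) (fun ν l => KK l (pF ν))]
  rw [Finset.sum_eq_single_of_mem lam (Finset.mem_univ _)]
  · rw [JJ_KK N _ _ (pF_antitone lam) (pF_deg lam).le rfl]; simp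
  · intro ν _ hne
    rw [JJ_KK N _ _ (pF_antitone lam) (pF_deg lam).le (by rw [pF_deg, pF_deg]), if_neg]
    · simp
    · exact fun he => hne (pF_inj he)

noncomputable def KKlin (N : ℕ) : (Nat.Partition N → ℚ) →ₗ[ℚ] (Nat.Partition N → ℚ) where
  toFun c p := ∑ ν, c ν * KK p.parts.toList (pF ν)
  map_add' c d := by
    ext p; simp [add_mul, Finset.sum_add_distrib]
  map_smul' a c := by
    ext p; simp [Finset.mul_sum, mul_assoc]

lemma exists_expansion {N : ℕ} (f : List ℕ → ℚ) (hf : LInv f)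
    (hs : ∀ l : List ℕ, l.sum ≠ N → f l = 0) :
    ∃ c : Nat.Partition N → ℚ, ∀ l, f l = ∑ ν, c ν * KK l (pF ν) := by
  have hsurj : Function.Surjective (KKlin N) := by
    rw [← LinearMap.injective_iff_surjective, injective_iff_map_eq_zero]
    intro c hc
    ext lam
    rw [coeff_eq c (fun _ => 0)]
    · have := JJ_sum (∅ : Finset ℕ) (fun _ => 0) N (pF lam) (fun _ _ => 0)
      simpa using this
    · intro l hl
      obtain ⟨p, hp⟩ := LInv_part l hl
      rw [hp _ (sum_LInv Finset.univ c (fun ν l => KK l (pF ν)) (fun ν => KK_LInv ν))]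
      exact (congrFun hc p).symm
  obtain ⟨c, hc⟩ := hsurj (fun p => f p.parts.toList)
  refine ⟨c, fun l => ?_⟩
  by_cases hl : l.sum = N
  · obtain ⟨p, hp⟩ := LInv_part l hl
    rw [hp _ hf, hp _ (sum_LInv Finset.univ c (fun ν l => KK l (pF ν)) (fun ν => KK_LInv ν))]
    exact (congrFun hc p).symm
  · rw [hs l hl, Finset.sum_eq_zero]
    intro ν _
    have : KK l (pF ν) = 0 := by
      by_contra h
      exact hl (by rw [KK_deg l _ h, pF_deg])
    rw [this, mul_zero]


/-! ## Colorings -/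

noncomputable def stabs {V : Type*} (G : SimpleGraph V) (A : Finset V) (k : ℕ) : Finset (Finset V) :=
  (A.powersetCard k).filter fun B => ∀ u ∈ B, ∀ v ∈ B, ¬G.Adj u v

lemma mem_stabs {V : Type*} (G : SimpleGraph V) (A B : Finset V) (k : ℕ) :
    B ∈ stabs G A k ↔ B ⊆ A ∧ B.card = k ∧ ∀ u ∈ B, ∀ v ∈ B, ¬G.Adj u v := by
  unfold stabs
  rw [Finset.mem_filter, Finset.mem_powersetCard, and_assoc]

noncomputable def XL {V : Type*} (G : SimpleGraph V) : List ℕ → Finset V → ℚ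
  | [], A => if A = ∅ then 1 else 0
  | k :: l, A => ∑ B ∈ stabs G A k, XL G l (A \ B)

lemma XL_card {V : Type*} (G : SimpleGraph V) (l : List ℕ) :
    ∀ A, XL G l A ≠ 0 → l.sum = A.card := by
  induction l with
  | nil => intro A h; simp [XL] at h; simp [h]
  | cons k l ih =>
    intro A h
    obtain ⟨B, hB, h2⟩ := Finset.exists_ne_zero_of_sum_ne_zero h
    have := ih _ h2
    rw [mem_stabs] at hB
    have h3 := Finset.card_sdiff_add_card_eq_card hB.1
    simp; omega

lemma XL_perm {V : Type*} (G : SimpleGraph V) {l l' : List ℕ} (h : l.Perm l') :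
    ∀ A, XL G l A = XL G l' A := by
  induction h with
  | nil => intro; rfl
  | cons k _ ih => intro ν; exact Finset.sum_congr rfl fun κ _ => ih _
  | swap k m l =>
    intro A
    simp only [XL]
    rw [Finset.sum_sigma', Finset.sum_sigma']
    have key : ∀ k m : ℕ, ∀ a ∈ (stabs G A k).sigma fun B => stabs G (A \ B) m,
      (⟨a.2, a.1⟩ : Σ _ : Finset V, Finset V) ∈ (stabs G A m).sigma fun B => stabs G (A \ B) k := by
      rintro k m ⟨B, C⟩ h
      simp only [Finset.mem_sigma, mem_stabs] at h ⊢
      obtain ⟨⟨a1, a2, a3⟩, b1, b2, b3⟩ := h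
      rw [Finset.subset_sdiff] at b1
      exact ⟨⟨b1.1, b2, b3⟩, Finset.subset_sdiff.mpr ⟨a1, b1.2.symm⟩, a2, a3⟩
    refine Finset.sum_bij' (fun a _ => ⟨a.2, a.1⟩) (fun a _ => ⟨a.2, a.1⟩)
      (key _ _) (key _ _) (fun _ _ => rfl) (fun _ _ => rfl) (fun a _ => ?_)
    dsimp only
    rw [sdiff_right_comm]
  | trans _ _ h1 h2 => intro ν; rw [h1, h2]

lemma XL_filter {V : Type*} (G : SimpleGraph V) (l : List ℕ) : ∀ A : Finset V,
    XL G (l.filter (· ≠ 0)) A = XL G l A := by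
  induction l with
  | nil => intros; rfl
  | cons k l ih =>
    intro A
    by_cases hk : k = 0
    · subst hk
      have : stabs G A 0 = {∅} := by
        ext B
        rw [mem_stabs, Finset.mem_singleton]
        constructor
        · rintro ⟨-, h, -⟩; simpa using h
        · rintro rfl; simp
      simp only [XL, this, Finset.sum_singleton, Finset.sdiff_empty]
      simpa using ih A
    · rw [List.filter_cons_of_pos (by simpa using hk)]
      exact Finset.sum_congr rfl fun B _ => ih _

/-- weights as lists, last color first -/
def lst (μ : ℕ → ℕ) : ℕ → List ℕ
  | 0 => []
  | n + 1 => μ (n + 1) :: lst μ n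

def ColSet {V : Type*} (G : SimpleGraph V) (A : Finset V) (n : ℕ) (μ : ℕ → ℕ) : Set (V → ℕ) :=
  {f | (∀ v, v ∉ A → f v = 0) ∧ (∀ v ∈ A, 0 < f v ∧ f v ≤ n) ∧
    (∀ u ∈ A, ∀ v ∈ A, G.Adj u v → f u ≠ f v) ∧
    ∀ i, 1 ≤ i → i ≤ n → (A.filter fun v => f v = i).card = μ i}

lemma ColSet_finite {V : Type*} [Fintype V] (G : SimpleGraph V) (A : Finset V) (n : ℕ)
    (μ : ℕ → ℕ) : (ColSet G A n μ).Finite := by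
  refine (Set.Finite.pi' (ι := V) (t := fun _ => Set.Iic n) (fun _ => Set.finite_Iic n)).subset ?_
  intro f hf v
  by_cases hv : v ∈ A
  · exact (hf.2.1 v hv).2
  · simp [hf.1 v hv]

lemma ColSet_card {V : Type*} [Fintype V] (G : SimpleGraph V) (μ : ℕ → ℕ) (n : ℕ) :
    ∀ A : Finset V, ((ColSet_finite G A n μ).toFinset.card : ℚ) = XL G (lst μ n) A := by
  induction n with
  | zero =>
    intro A
    simp only [lst, XL]
    split_ifs with h
    · subst h
      rw [Nat.cast_eq_one, Finset.card_eq_one]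
      refine ⟨fun _ => 0, ?_⟩
      ext f
      simp only [Set.Finite.mem_toFinset, Finset.mem_singleton, ColSet, Set.mem_ofPred_eq]
      constructor
      · intro hf; funext v; exact hf.1 v (by simp)
      · rintro rfl
        refine ⟨fun _ _ => rfl, by simp, by simp, fun i h1 h2 => by omega⟩
    · rw [Nat.cast_eq_zero, Finset.card_eq_zero]
      rw [Finset.eq_empty_iff_forall_notMem]
      intro f hf
      simp only [Set.Finite.mem_toFinset] at hf
      obtain ⟨v, hv⟩ := Finset.nonempty_iff_ne_empty.mpr h
      have := hf.2.1 v hv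
      omega
  | succ n ih =>
    intro A
    simp only [lst, XL]
    rw [Finset.card_eq_sum_card_fiberwise (f := fun f => A.filter fun v => f v = n + 1)
      (t := stabs G A (μ (n + 1)))]
    · push_cast
      refine Finset.sum_congr rfl fun B hB => ?_
      rw [← ih, Nat.cast_inj]
      rw [mem_stabs] at hB
      obtain ⟨hBA, hBc, hBs⟩ := hB
      refine Finset.card_bij' (fun f _ => fun v => if v ∈ B then 0 else f v)
        (fun f _ => fun v => if v ∈ B then n + 1 else f v) ?_ ?_ ?_ ?_
      · intro f hf
        simp only [Finset.mem_filter, Set.Finite.mem_toFinset] at hf ⊢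
        obtain ⟨⟨h1, h2, h3, h4⟩, hfB⟩ := hf
        have hB' : ∀ v, v ∈ B ↔ v ∈ A ∧ f v = n + 1 := fun v => by rw [← hfB, Finset.mem_filter]
        refine ⟨fun v hv => ?_, fun v hv => ?_, fun u hu v hv huv => ?_, fun i hi hin => ?_⟩
        · by_cases hvB : v ∈ B
          · simp [hvB]
          · simp only [if_neg hvB]
            exact h1 v (fun hA => hv (by simp [hA, hvB]))
        · rw [Finset.mem_sdiff] at hv
          simp only [if_neg hv.2]
          have := h2 v hv.1
          have hne : f v ≠ n + 1 := fun h => hv.2 ((hB' v).mpr ⟨hv.1, h⟩)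
          omega
        · rw [Finset.mem_sdiff] at hu hv
          simp only [if_neg hv.2, if_neg hu.2]
          exact h3 u hu.1 v hv.1 huv
        · rw [← h4 i hi (by omega)]
          congr 1
          ext v
          simp only [Finset.mem_filter, Finset.mem_sdiff]
          constructor
          · rintro ⟨⟨a, b⟩, c⟩
            rw [if_neg b] at c
            exact ⟨a, c⟩
          · rintro ⟨a, c⟩
            have : v ∉ B := fun h => by have := ((hB' v).mp h).2; omega
            exact ⟨⟨a, this⟩, by rw [if_neg this]; exact c⟩
      · intro f hf
        simp only [Finset.mem_filter, Set.Finite.mem_toFinset] at hf ⊢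
        obtain ⟨h1, h2, h3, h4⟩ := hf
        have hB' : ∀ v, v ∈ A → ((if v ∈ B then n + 1 else f v) = n + 1 ↔ v ∈ B) := by
          intro v hv
          by_cases hvB : v ∈ B
          · simp [hvB]
          · rw [if_neg hvB]
            simp only [hvB, iff_false]
            have := h2 v (by simp [hv, hvB])
            omega
        have hfil : (A.filter fun v => (if v ∈ B then n + 1 else f v) = n + 1) = B := by
          ext v
          rw [Finset.mem_filter]
          constructor
          · rintro ⟨a, b⟩; exact (hB' v a).mp b
          · intro h; exact ⟨hBA h, (hB' v (hBA h)).mpr h⟩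
        refine ⟨⟨fun v hv => ?_, fun v hv => ?_, fun u hu v hv huv => ?_, fun i hi hin => ?_⟩, hfil⟩
        · have hvB : v ∉ B := fun h => hv (hBA h)
          simp only [if_neg hvB]
          exact h1 v (fun hA => hv (Finset.mem_sdiff.mp hA).1)
        · by_cases hvB : v ∈ B
          · simp [hvB]
          · simp only [if_neg hvB]
            have := h2 v (by simp [hv, hvB])
            omega
        · by_cases huB : u ∈ B <;> by_cases hvB : v ∈ B
          · exact absurd huv (hBs u huB v hvB)
          · intro h
            simp only [if_pos huB] at h
            exact hvB ((hB' v hv).mp h.symm)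
          · intro h
            simp only [if_pos hvB] at h
            exact huB ((hB' u hu).mp h)
          · simp only [if_neg huB, if_neg hvB]
            exact h3 u (by simp [hu, huB]) v (by simp [hv, hvB]) huv
        · by_cases hin' : i = n + 1
          · subst hin'
            rw [hfil, hBc]
          · rw [← h4 i hi (by omega)]
            congr 1
            ext v
            simp only [Finset.mem_filter, Finset.mem_sdiff]
            by_cases hvB : v ∈ B
            · simp only [hvB]
              simp
              omega
            · simp [hvB]
      · intro f hf
        simp only [Finset.mem_filter, Set.Finite.mem_toFinset] at hf
        funext v
        by_cases hvB : v ∈ B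
        · simp only [if_pos hvB]
          rw [← hf.2, Finset.mem_filter] at hvB
          exact hvB.2.symm
        · simp only [if_neg hvB]
      · intro f hf
        simp only [Set.Finite.mem_toFinset] at hf
        funext v
        by_cases hvB : v ∈ B
        · simp only [if_pos hvB]
          exact (hf.1 v (by simp [hvB])).symm
        · simp only [if_neg hvB]
    · intro f hf
      simp only [Set.Finite.coe_toFinset] at hf
      obtain ⟨h1, h2, h3, h4⟩ := hf
      simp only [Finset.mem_coe]
      rw [mem_stabs]
      refine ⟨Finset.filter_subset _ _, h4 (n + 1) (by omega) le_rfl, fun u hu v hv huv => ?_⟩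
      rw [Finset.mem_filter] at hu hv
      exact h3 u hu.1 v hv.1 huv (by rw [hu.2, hv.2])

lemma XCoeff_eq {V : Type*} [Fintype V] (G : SimpleGraph V) (μ : ℕ → ℕ) (n : ℕ) (h0 : μ 0 = 0)
    (hn : ∀ i, n < i → μ i = 0) : XCoeff G μ = XL G (lst μ n) Finset.univ := by
  rw [← ColSet_card, XCoeff, Nat.cast_inj]
  refine Nat.subtype_card _ fun f => ?_
  rw [Set.Finite.mem_toFinset]
  have hc : ∀ i, Nat.card {v : V // f v = i} = (Finset.univ.filter fun v => f v = i).card :=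
    fun i => Nat.subtype_card _ (by simp)
  simp only [hc, IsProperColoring, ColSet, Set.mem_ofPred_eq, Finset.mem_univ, not_true_eq_false,
    false_imp_iff, true_and, implies_true, true_imp_iff]
  constructor
  · rintro ⟨h2, h3, h4⟩
    refine ⟨⟨fun v => (h2 v).1, h3⟩, fun i => ?_⟩
    by_cases hi : i = 0
    · subst hi
      rw [h0, Finset.card_eq_zero, Finset.filter_eq_empty_iff]
      intro v _
      have := h2 v; omega
    · by_cases hi2 : i ≤ n
      · exact h4 i (by omega) hi2
      · rw [hn i (by omega), Finset.card_eq_zero, Finset.filter_eq_empty_iff]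
        intro v _
        have := h2 v; omega
  · rintro ⟨⟨h1, h2⟩, h3⟩
    refine ⟨fun v => ⟨h1 v, ?_⟩, h2, fun i _ _ => h3 i⟩
    by_contra hc
    have := h3 (f v)
    rw [hn _ (by omega), Finset.card_eq_zero, Finset.filter_eq_empty_iff] at this
    exact this (Finset.mem_univ v) rfl

lemma XCoeff_zero {V : Type*} [Fintype V] (G : SimpleGraph V) (μ : ℕ → ℕ)
    (h : XCoeff G μ ≠ 0) : μ 0 = 0 ∧ ∃ n, ∀ i, n < i → μ i = 0 := by
  rw [XCoeff, Nat.cast_ne_zero, Nat.card_ne_zero] at h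
  obtain ⟨⟨f, ⟨h1, h2⟩, h3⟩⟩ := h.1
  constructor
  · rw [← h3 0, Nat.card_eq_zero]
    left
    exact ⟨fun v => by have := h1 v.1; have := v.2; omega⟩
  · refine ⟨Finset.univ.sup f, fun i hi => ?_⟩
    rw [← h3 i, Nat.card_eq_zero]
    left
    refine ⟨fun v => ?_⟩
    have := Finset.le_sup (f := f) (Finset.mem_univ v.1)
    have := v.2; omega


/-! ## Semistandard tableaux -/

noncomputable def DF (ν : ℕ →₀ ℕ) : Finset Cell :=
  ν.support.biUnion fun j => (Finset.range (ν j)).image fun c => (j, c)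

lemma mem_DF (ν : ℕ →₀ ℕ) (c : Cell) : c ∈ DF ν ↔ c.2 < ν c.1 := by
  unfold DF
  simp only [Finset.mem_biUnion, Finsupp.mem_support_iff, Finset.mem_image, Finset.mem_range]
  constructor
  · rintro ⟨j, _, a, h, rfl⟩; exact h
  · intro h; exact ⟨c.1, by omega, c.2, h, rfl⟩

lemma DF_card (ν : ℕ →₀ ℕ) : (DF ν).card = deg ν := by
  unfold DF
  rw [Finset.card_biUnion]
  · unfold deg Finsupp.sum
    refine Finset.sum_congr rfl fun j _ => ?_
    rw [Finset.card_image_of_injective _ (fun a b h => by simpa using h), Finset.card_range]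
  · intro i _ j _ hij
    rw [Function.onFun, Finset.disjoint_left]
    intro c h1 h2
    simp only [Finset.mem_image] at h1 h2
    obtain ⟨a, _, rfl⟩ := h1
    obtain ⟨b, _, h⟩ := h2
    simp only [Prod.mk.injEq] at h
    exact hij h.1.symm

lemma card_filter_down (P : ℕ → Prop) [DecidablePred P] (m : ℕ) (h : ∀ c, c + 1 < m → P (c + 1) → P c) (c : ℕ) :
    c < ((Finset.range m).filter P).card ↔ c < m ∧ P c := by
  induction m with
  | zero => simp
  | succ m ih =>
    by_cases hm : P m
    · have all : ∀ k, k ≤ m → P (m - k) := by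
        intro k
        induction k with
        | zero => intro _; exact hm
        | succ k ihk =>
          intro hk
          apply h (m - (k + 1)) (by omega)
          rw [show m - (k + 1) + 1 = m - k by omega]
          exact ihk (by omega)
      rw [Finset.filter_true_of_mem, Finset.card_range]
      · constructor
        · intro hc
          refine ⟨hc, ?_⟩
          have := all (m - c) (by omega)
          rwa [show m - (m - c) = c by omega] at this
        · exact fun h => h.1
      · intro x hx
        have hx := Finset.mem_range.mp hx
        have := all (m - x) (by omega)
        rwa [show m - (m - x) = x by omega] at this
    · rw [Finset.range_add_one, Finset.filter_insert, if_neg hm,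
        ih (fun c hc => h c (by omega))]
      constructor
      · exact fun h => ⟨by omega, h.2⟩
      · rintro ⟨h1, h2⟩
        refine ⟨?_, h2⟩
        rcases Nat.lt_succ_iff_lt_or_eq.mp h1 with h | h
        · exact h
        · subst h; exact absurd h2 hm

def TabSet (ν : ℕ →₀ ℕ) (n : ℕ) (μ : ℕ → ℕ) : Set (Cell → ℕ) :=
  {t | (∀ c, ¬ c.2 < ν c.1 → t c = 0) ∧ (∀ c : Cell, c.2 < ν c.1 → 0 < t c ∧ t c ≤ n) ∧
    (∀ i j : ℕ, j + 1 < ν i → t (i, j) ≤ t (i, j + 1)) ∧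
    (∀ i j : ℕ, j < ν (i + 1) → t (i, j) < t (i + 1, j)) ∧
    ∀ i, 1 ≤ i → i ≤ n → ((DF ν).filter fun c => t c = i).card = μ i}

lemma TabSet_finite (ν : ℕ →₀ ℕ) (n : ℕ) (μ : ℕ → ℕ) : (TabSet ν n μ).Finite := by
  have hf : (Set.Finite {g : (DF ν) → ℕ | ∀ c, g c ∈ Set.Iic n}) :=
    Set.Finite.pi' (fun _ => Set.finite_Iic n)
  refine Set.Finite.of_finite_image (f := fun t => fun c : DF ν => t c.1) (hf.subset ?_) ?_
  · rintro _ ⟨t, ht, rfl⟩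
    intro c
    exact (ht.2.1 c.1 ((mem_DF _ _).mp c.2)).2
  · intro t ht s hs hts
    funext c
    by_cases hc : c.2 < ν c.1
    · exact congrFun hts ⟨c, (mem_DF _ _).mpr hc⟩
    · rw [ht.1 c hc, hs.1 c hc]

noncomputable def kap (ν : ℕ →₀ ℕ) (n : ℕ) (t : Cell → ℕ) : ℕ →₀ ℕ :=
  mkF fun j => ((Finset.range (ν j)).filter fun c => t (j, c) ≤ n).card

lemma kap_spec {ν : ℕ →₀ ℕ} {n m : ℕ} {μ : ℕ → ℕ} {t : Cell → ℕ} (ht : t ∈ TabSet ν m μ) (j c : ℕ) :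
    c < kap ν n t j ↔ c < ν j ∧ t (j, c) ≤ n := by
  obtain ⟨b, hb⟩ := shp_bound ν
  unfold kap
  rw [mkF_apply _ b (fun j hj => by simp [hb j hj]) j]
  refine card_filter_down (fun c => t (j, c) ≤ n) (ν j) (fun c hc h => ?_) c
  exact le_trans (ht.2.2.1 j c hc) h

lemma kap_mem {ν : ℕ →₀ ℕ} (hν : Antitone ν) {n : ℕ} {μ : ℕ → ℕ} {t : Cell → ℕ} (ht : t ∈ TabSet ν (n + 1) μ) :
    kap ν n t ∈ hstrips ν (μ (n + 1)) := by
  rw [mem_hstrips]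
  have hsp := kap_spec (n := n) ht
  refine ⟨fun j => ⟨?_, ?_⟩, ?_⟩
  · by_contra hc
    have h1 := ht.2.2.2.1 j (kap ν n t j) (by omega)
    have h2 := (ht.2.1 (j + 1, kap ν n t j) (by simp; omega)).2
    have h3 : kap ν n t j < ν j := by
      have : ν (j + 1) ≤ ν j := hν (Nat.le_succ j)
      omega
    have := (hsp j (kap ν n t j)).mpr ⟨h3, by omega⟩
    omega
  · by_contra hc
    have := (hsp j (ν j)).mp (by omega)
    omega
  · rw [← ht.2.2.2.2 (n + 1) (by omega) le_rfl, ← DF_card, ← DF_card]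
    rw [← Finset.card_union_of_disjoint]
    · congr 1
      ext ⟨j, c⟩
      rw [Finset.mem_union, Finset.mem_filter, mem_DF, mem_DF]
      simp only
      rw [hsp]
      constructor
      · rintro (h | h) <;> exact h.1
      · intro h
        have := (ht.2.1 (j, c) h).2
        by_cases h2 : t (j, c) ≤ n
        · exact Or.inl ⟨h, h2⟩
        · exact Or.inr ⟨h, by omega⟩
    · rw [Finset.disjoint_left]
      rintro ⟨j, c⟩ h1 h2
      rw [mem_DF] at h1
      have := (hsp j c).mp h1
      have := (Finset.mem_filter.mp h2).2
      omega

lemma TabSet_card (μ : ℕ → ℕ) (n : ℕ) : ∀ ν : ℕ →₀ ℕ, Antitone ν →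
    ((TabSet_finite ν n μ).toFinset.card : ℚ) = KK (lst μ n) ν := by
  induction n with
  | zero =>
    intro ν hν
    simp only [lst, KK]
    split_ifs with h
    · subst h
      rw [Nat.cast_eq_one, Finset.card_eq_one]
      refine ⟨fun _ => 0, ?_⟩
      ext f
      simp only [Set.Finite.mem_toFinset, Finset.mem_singleton, TabSet, Set.mem_ofPred_eq]
      constructor
      · intro hf; funext v; exact hf.1 v (by simp)
      · rintro rfl
        refine ⟨fun _ _ => rfl, by simp, by simp, by simp, fun i h1 h2 => by omega⟩
    · rw [Nat.cast_eq_zero, Finset.card_eq_zero]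
      rw [Finset.eq_empty_iff_forall_notMem]
      intro f hf
      simp only [Set.Finite.mem_toFinset] at hf
      have h0 := (lt_len_iff hν 0).mp (len_pos h)
      have := hf.2.1 (0, 0) h0
      omega
  | succ n ih =>
    intro ν hν
    simp only [lst, KK]
    rw [Finset.card_eq_sum_card_fiberwise (f := kap ν n) (t := hstrips ν (μ (n + 1)))]
    · push_cast
      refine Finset.sum_congr rfl fun κ hκ => ?_
      rw [← ih κ (hstrips_antitone hκ), Nat.cast_inj]
      have hκa := hstrips_antitone hκ
      rw [mem_hstrips] at hκ
      obtain ⟨hbtw, hdeg⟩ := hκ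
      refine Finset.card_bij' (fun t _ => fun c => if c.2 < κ c.1 then t c else 0)
        (fun t _ => fun c => if c.2 < κ c.1 then t c else if c.2 < ν c.1 then n + 1 else 0)
        ?_ ?_ ?_ ?_
      · intro t ht
        simp only [Finset.mem_filter, Set.Finite.mem_toFinset] at ht ⊢
        obtain ⟨ht, hk⟩ := ht
        have hsp : ∀ j c, c < κ j ↔ c < ν j ∧ t (j, c) ≤ n := by
          rw [← hk]; exact kap_spec ht
        obtain ⟨h1, h2, h3, h4, h5⟩ := ht
        refine ⟨fun c hc => ?_, fun c hc => ?_, fun i j hj => ?_, fun i j hj => ?_,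
          fun i hi hin => ?_⟩
        · simp [hc]
        · simp only [if_pos hc]
          have := (hsp c.1 c.2).mp hc
          exact ⟨(h2 c this.1).1, this.2⟩
        · simp only [if_pos hj, if_pos (show j < κ i by omega)]
          exact h3 i j ((hsp i _).mp hj).1
        · have : κ (i + 1) ≤ κ i := hκa (Nat.le_succ i)
          simp only [if_pos hj, if_pos (show j < κ i by omega)]
          exact h4 i j ((hsp _ _).mp hj).1
        · rw [← h5 i hi (by omega)]
          congr 1
          ext ⟨a, b⟩
          simp only [Finset.mem_filter, mem_DF]
          constructor
          · rintro ⟨x, y⟩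
            rw [if_pos x] at y
            exact ⟨((hsp _ _).mp x).1, y⟩
          · rintro ⟨x, y⟩
            have := (hsp a b).mpr ⟨x, by omega⟩
            exact ⟨this, by rw [if_pos this]; exact y⟩
      · intro t ht
        simp only [Finset.mem_filter, Set.Finite.mem_toFinset] at ht ⊢
        obtain ⟨h1, h2, h3, h4, h5⟩ := ht
        have hmem : (fun c : Cell => if c.2 < κ c.1 then t c else if c.2 < ν c.1 then n + 1 else 0)
            ∈ TabSet ν (n + 1) μ := by
          refine ⟨fun c hc => ?_, fun c hc => ?_, fun i j hj => ?_, fun i j hj => ?_,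
            fun i hi hin => ?_⟩
          · have := hbtw c.1
            simp only [if_neg (show ¬ c.2 < κ c.1 by omega), if_neg hc]
          · by_cases hc' : c.2 < κ c.1
            · simp only [if_pos hc']
              have := h2 c hc'; omega
            · simp [if_neg hc', hc]
          · by_cases hc' : j + 1 < κ i
            · simp only [if_pos hc', if_pos (show j < κ i by omega)]
              exact h3 i j hc'
            · simp only [if_neg hc', hj, if_true]
              by_cases hc'' : j < κ i
              · simp only [if_pos hc'']
                have := h2 (i, j) hc''; omega
              · simp only [if_neg hc'', if_pos (show j < ν i by omega)]; omega
          · have hji : j < κ i := by have := hbtw i; omega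
            simp only [if_pos hji]
            by_cases hc' : j < κ (i + 1)
            · simp only [if_pos hc']
              exact h4 i j hc'
            · simp only [if_neg hc', if_pos hj]
              have := h2 (i, j) hji; omega
          · by_cases hi' : i = n + 1
            · subst hi'
              have : (DF ν).filter (fun c : Cell => (if c.2 < κ c.1 then t c else
                  if c.2 < ν c.1 then n + 1 else 0) = n + 1) = DF ν \ DF κ := by
                ext c
                simp only [Finset.mem_filter, mem_DF, Finset.mem_sdiff]
                refine and_congr_right fun hc => ?_
                by_cases hc' : c.2 < κ c.1
                · simp only [if_pos hc']
                  have := h2 c hc'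
                  constructor
                  · omega
                  · exact fun h => absurd hc' h
                · simp [if_neg hc', hc]
                  omega
              rw [this]
              have hsub : DF κ ⊆ DF ν := by
                intro c hc
                rw [mem_DF] at hc ⊢
                have := hbtw c.1; omega
              have := Finset.card_sdiff_add_card_eq_card hsub
              rw [DF_card, DF_card] at this
              omega
            · rw [← h5 i hi (by omega)]
              congr 1
              ext c
              simp only [Finset.mem_filter, mem_DF]
              have := hbtw c.1
              by_cases hc' : c.2 < κ c.1
              · simp only [hc', true_and]
                constructor
                · exact fun h => h.2
                · exact fun h => ⟨by omega, h⟩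
              · simp only [if_neg hc']
                constructor
                · rintro ⟨a, b⟩
                  rw [if_pos a] at b; omega
                · rintro ⟨a, b⟩; exact absurd a hc'
        refine ⟨hmem, ?_⟩
        have hsp := kap_spec (n := n) hmem
        ext j
        refine eq_of_forall_lt_iff fun c => ?_
        rw [hsp]
        simp only
        have := hbtw j
        by_cases hc' : c < κ j
        · simp only [hc', iff_true]
          exact ⟨by omega, (h2 (j, c) hc').2⟩
        · rw [if_neg hc']
          simp only [hc', iff_false]
          rintro ⟨a, b⟩
          rw [if_pos a] at b; omega
      · intro t ht
        simp only [Finset.mem_filter, Set.Finite.mem_toFinset] at ht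
        obtain ⟨ht, hk⟩ := ht
        have hsp : ∀ j c, c < κ j ↔ c < ν j ∧ t (j, c) ≤ n := by
          rw [← hk]; exact kap_spec ht
        funext c
        by_cases hc' : c.2 < κ c.1
        · simp only [if_pos hc']
        · simp only [if_neg hc']
          by_cases hc : c.2 < ν c.1
          · rw [if_pos hc]
            have a := ht.2.1 c hc
            have b : ¬ t c ≤ n := fun h => hc' ((hsp c.1 c.2).mpr ⟨hc, h⟩)
            omega
          · rw [if_neg hc, ht.1 c hc]
      · intro t ht
        simp only [Set.Finite.mem_toFinset] at ht
        funext c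
        by_cases hc' : c.2 < κ c.1
        · simp only [if_pos hc']
        · simp only [if_neg hc']
          exact (ht.1 c hc').symm
    · intro t ht
      simp only [Set.Finite.coe_toFinset] at ht
      exact kap_mem hν ht

lemma mem_diag {N : ℕ} (lam : Nat.Partition N) (c : Cell) : c ∈ diag lam ↔ c.2 < pF lam c.1 := by
  rw [pF_apply]; rfl

lemma schurFn_eq {N : ℕ} (lam : Nat.Partition N) (μ : ℕ → ℕ) (n : ℕ) (h0 : μ 0 = 0)
    (hn : ∀ i, n < i → μ i = 0) : schurFn lam μ = KK (lst μ n) (pF lam) := by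
  rw [← TabSet_card _ _ _ (pF_antitone lam), schurFn, Nat.cast_inj]
  refine Nat.subtype_card _ fun t => ?_
  rw [Set.Finite.mem_toFinset]
  have hc : ∀ i, Nat.card {c : Cell // c ∈ diag lam ∧ t c = i} =
      ((DF (pF lam)).filter fun c => t c = i).card :=
    fun i => Nat.subtype_card _ (by simp [mem_DF, mem_diag])
  simp only [hc]
  simp only [IsSSYT, TabSet, Set.mem_ofPred_eq, mem_diag]
  constructor
  · rintro ⟨h1, h2, h3, h4, h5⟩
    refine ⟨⟨h1, fun c hc => (h2 c hc).1, h3, h4⟩, fun i => ?_⟩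
    by_cases hi : i = 0
    · subst hi
      rw [h0, Finset.card_eq_zero, Finset.filter_eq_empty_iff]
      intro c hc
      have := h2 c ((mem_DF _ _).mp hc); omega
    · by_cases hi2 : i ≤ n
      · exact h5 i (by omega) hi2
      · rw [hn i (by omega), Finset.card_eq_zero, Finset.filter_eq_empty_iff]
        intro c hc
        have := h2 c ((mem_DF _ _).mp hc); omega
  · rintro ⟨⟨h1, h2, h3, h4⟩, h5⟩
    refine ⟨h1, fun c hc => ⟨h2 c hc, ?_⟩, h3, h4, fun i _ _ => h5 i⟩
    by_contra hcon
    have := h5 (t c)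
    rw [hn _ (by omega), Finset.card_eq_zero, Finset.filter_eq_empty_iff] at this
    exact this ((mem_DF _ _).mpr hc) rfl

lemma schurFn_zero {N : ℕ} (lam : Nat.Partition N) (μ : ℕ → ℕ)
    (h : schurFn lam μ ≠ 0) : μ 0 = 0 ∧ ∃ n, ∀ i, n < i → μ i = 0 := by
  rw [schurFn, Nat.cast_ne_zero, Nat.card_ne_zero] at h
  obtain ⟨⟨t, ⟨h0, h1, -, -⟩, h3⟩⟩ := h.1
  constructor
  · rw [← h3 0, Nat.card_eq_zero]
    left
    exact ⟨fun c => by have := h1 c.1 c.2.1; have := c.2.2; omega⟩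
  · refine ⟨(DF (pF lam)).sup t, fun i hi => ?_⟩
    rw [← h3 i, Nat.card_eq_zero]
    left
    refine ⟨fun c => ?_⟩
    have := Finset.le_sup (f := t) ((mem_DF (pF lam) c.1).mpr ((mem_diag _ _).mp c.2.1))
    have := c.2.2; omega


/-! ## Geometry of special rim hooks -/

def DD (ν : ℕ →₀ ℕ) : Set Cell := {c | c.2 < ν c.1}

lemma mem_DD (ν : ℕ →₀ ℕ) (c : Cell) : c ∈ DD ν ↔ c.2 < ν c.1 := Iff.rfl

def HH (ν : ℕ →₀ ℕ) (i : ℕ) : Set Cell := DD ν \ DD (rem ν i)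

def ct (c : Cell) : ℤ := (c.2 : ℤ) - (c.1 : ℤ)

lemma mem_HH (ν : ℕ →₀ ℕ) (i : ℕ) (c : Cell) :
    c ∈ HH ν i ↔ i ≤ c.1 ∧ c.2 < ν c.1 ∧ ν (c.1 + 1) - 1 ≤ c.2 := by
  unfold HH
  rw [Set.mem_sdiff, mem_DD, mem_DD, rem_apply]
  split_ifs <;> omega

lemma rtg_rev {α : Type*} {r : α → α → Prop} (h : ∀ a b, r a b → r b a) {a b : α}
    (hab : Relation.ReflTransGen r a b) : Relation.ReflTransGen r b a := by
  induction hab with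
  | refl => exact Relation.ReflTransGen.refl
  | tail _ hbc ih => exact Relation.ReflTransGen.head (h _ _ hbc) ih

lemma DD_rem_subset (ν : ℕ →₀ ℕ) (hν : Antitone ν) (i : ℕ) : DD (rem ν i) ⊆ DD ν := by
  intro c hc
  rw [mem_DD, rem_apply] at hc
  rw [mem_DD]
  have : ν (c.1 + 1) ≤ ν c.1 := hν (Nat.le_succ _)
  split_ifs at hc <;> omega

lemma DD_diff_HH (ν : ℕ →₀ ℕ) (hν : Antitone ν) (i : ℕ) : DD ν \ HH ν i = DD (rem ν i) := by
  unfold HH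
  rw [Set.sdiff_sdiff_cancel_left (DD_rem_subset ν hν i)]

lemma DD_young {ν : ℕ →₀ ℕ} (hν : Antitone ν) : IsYoungDiag (DD ν) := by
  intro i j i' j' h hi hj
  rw [mem_DD] at h ⊢
  have : ν i ≤ ν i' := hν hi
  simp only at h ⊢
  omega

section
variable {ν : ℕ →₀ ℕ} {i : ℕ}

lemma HH_inj (hν : Antitone ν) {c d : Cell} (hc : c ∈ HH ν i) (hd : d ∈ HH ν i)
    (h : ct c = ct d) : c = d := by
  have key : ∀ c d : Cell, c ∈ HH ν i → d ∈ HH ν i → ct c = ct d → ¬ c.1 < d.1 := by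
    intro c d hc hd h hlt
    rw [mem_HH] at hc hd
    unfold ct at h
    have : ν d.1 ≤ ν (c.1 + 1) := hν hlt
    omega
  have h1 := key c d hc hd h
  have h2 := key d c hd hc h.symm
  unfold ct at h
  ext <;> omega

lemma HH_step (hν : Antitone ν) {c : Cell} (hc : c ∈ HH ν i) :
    c = (i, ν i - 1) ∨ ∃ d ∈ HH ν i, cellAdj c d ∧ ct d = ct c + 1 := by
  obtain ⟨a, b⟩ := c
  rw [mem_HH] at hc
  simp only at hc
  by_cases h : b + 1 < ν a
  · right
    refine ⟨(a, b + 1), ?_, ?_, ?_⟩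
    · rw [mem_HH]; simp only; omega
    · left; simp
    · simp [ct]; ring
  · by_cases hai : a = i
    · left; subst hai; ext <;> simp; omega
    · right
      refine ⟨(a - 1, b), ?_, ?_, ?_⟩
      · rw [mem_HH]; simp only
        have : ν a ≤ ν (a - 1) := hν (by omega)
        rw [show a - 1 + 1 = a by omega]
        omega
      · right; simp; omega
      · simp only [ct]; omega

lemma HH_row (hν : Antitone ν) (hi : i < len ν) {a : ℕ} (h1 : i ≤ a) (h2 : a < len ν) : (a, ν a - 1) ∈ HH ν i := by
  rw [mem_HH]
  simp only
  have := (lt_len_iff hν a).mp h2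
  have : ν (a + 1) ≤ ν a := hν (Nat.le_succ a)
  omega

lemma HH_bottom (hν : Antitone ν) (hi : i < len ν) : (len ν - 1, 0) ∈ HH ν i := by
  rw [mem_HH]
  simp only
  have := (lt_len_iff hν (len ν - 1)).mp (by omega)
  have := eq_zero_of_len_le hν (j := len ν - 1 + 1) (by omega)
  omega

lemma HH_bounds (hν : Antitone ν) (hi : i < len ν) {c : Cell} (hc : c ∈ HH ν i) :
    i ≤ c.1 ∧ c.1 < len ν ∧ -((len ν : ℤ) - 1) ≤ ct c ∧ ct c < -((len ν : ℤ) - 1) + hlen ν i := by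
  rw [mem_HH] at hc
  have h1 := (lt_len_iff hν c.1).mpr (by omega)
  have : ν c.1 ≤ ν i := hν hc.1
  refine ⟨hc.1, h1, ?_, ?_⟩
  · unfold ct; omega
  · unfold ct hlen; omega

lemma HH_surj (hν : Antitone ν) (hi : i < len ν) (k : ℕ) (hk : k < hlen ν i) : ∃ c ∈ HH ν i, ct c = -((len ν : ℤ) - 1) + k := by
  induction k with
  | zero =>
    refine ⟨_, HH_bottom hν hi, ?_⟩
    simp only [ct]; omega
  | succ k ih =>
    obtain ⟨c, hc, hct⟩ := ih (by omega)
    rcases HH_step hν hc with h | ⟨d, hd, _, hd2⟩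
    · exfalso
      subst h
      have := (lt_len_iff hν i).mp hi
      unfold ct at hct
      unfold hlen at hk
      simp only at hct
      omega
    · exact ⟨d, hd, by push_cast; omega⟩

lemma HH_conn_end (hν : Antitone ν) (hi : i < len ν) (n : ℕ) : ∀ c ∈ HH ν i, (-((len ν : ℤ) - 1) + hlen ν i - ct c).toNat ≤ n →
    Relation.ReflTransGen (fun a b => a ∈ HH ν i ∧ b ∈ HH ν i ∧ cellAdj a b) c (i, ν i - 1) := by
  induction n with
  | zero =>
    intro c hc h
    have := HH_bounds hν hi hc
    omega
  | succ n ih =>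
    intro c hc h
    rcases HH_step hν hc with h' | ⟨d, hd, h1, h2⟩
    · subst h'; exact Relation.ReflTransGen.refl
    · exact Relation.ReflTransGen.head ⟨hc, hd, h1⟩ (ih d hd (by omega))

lemma HH_rimhook (hν : Antitone ν) (hi : i < len ν) : IsRimHookOf (DD ν) (HH ν i) := by
  refine ⟨Set.sdiff_subset, ⟨⟨_, HH_bottom hν hi⟩, ?_, ?_⟩, ?_⟩
  · intro c hc d hd
    have h1 := HH_conn_end hν hi _ c hc le_rfl
    have h2 := HH_conn_end hν hi _ d hd le_rfl
    refine h1.trans ?_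
    refine rtg_rev ?_ h2
    rintro a b ⟨ha, hb, hab⟩
    refine ⟨hb, ha, ?_⟩
    unfold cellAdj at hab ⊢
    omega
  · rintro a b ⟨h1, -, -, h2⟩
    have := HH_inj hν h1 h2 (by simp [ct])
    simp at this
  · rw [DD_diff_HH ν hν]
    exact DD_young (rem_antitone hν i)

lemma HH_col (hν : Antitone ν) (hi : i < len ν) (a : ℕ) : ((a, 0) : Cell) ∈ HH ν i ↔ len (rem ν i) ≤ a ∧ a < len ν := by
  unfold HH
  rw [Set.mem_sdiff, mem_DD, mem_DD]
  simp only
  rw [← lt_len_iff hν, ← lt_len_iff (rem_antitone hν i)]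
  omega

lemma len_rem_lt (hν : Antitone ν) (hi : i < len ν) : len (rem ν i) < len ν := by
  have := (HH_col hν hi _).mp (HH_bottom hν hi)
  omega

end

lemma rimhook_char {ν : ℕ →₀ ℕ} (hν : Antitone ν) {H : Set Cell} (hH : IsRimHookOf (DD ν) H)
    {a : ℕ} (ha : ((a, 0) : Cell) ∈ H) : ∃ i, i < len ν ∧ H = HH ν i := by
  obtain ⟨hsub, ⟨-, hconn, hsq⟩, hY⟩ := hH
  set m : ℕ → ℕ := fun j => ((Finset.range (ν j)).filter fun c => (j, c) ∉ H).card with hm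
  have hmlt : ∀ j c, c < m j ↔ c < ν j ∧ (j, c) ∉ H := by
    intro j c
    refine card_filter_down (fun c => (j, c) ∉ H) (ν j) (fun c hc h => ?_) c
    exact (hY j (c + 1) j c ⟨hc, h⟩ le_rfl (by omega)).2
  have hmem : ∀ j c, (j, c) ∈ H ↔ m j ≤ c ∧ c < ν j := by
    intro j c
    have := hmlt j c
    constructor
    · intro h
      have h2 : c < ν j := hsub h
      refine ⟨?_, h2⟩
      by_contra hc
      exact (this.mp (by omega)).2 h
    · rintro ⟨h1, h2⟩
      by_contra hc
      have := this.mpr ⟨h2, hc⟩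
      omega
  have hmle : ∀ j, m j ≤ ν j := by
    intro j
    by_contra hc
    have := (hmlt j (ν j)).mp (by omega)
    omega
  have hmanti : ∀ j, m (j + 1) ≤ m j := by
    intro j
    by_contra hc
    have h1 := (hmlt (j + 1) (m j)).mp (by omega)
    have h2 := hY (j + 1) (m j) j (m j) h1 (by omega) le_rfl
    have := (hmlt j (m j)).mpr h2
    omega
  have hmanti' : Antitone m := antitone_nat_of_succ_le hmanti
  have hνs : ∀ j, ν (j + 1) ≤ ν j := fun j => hν (Nat.le_succ j)
  have ha2 := (hmem a 0).mp ha
  have hal := (lt_len_iff hν a).mpr ha2.2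
  have hml : m (len ν - 1) = 0 := by
    have := hmanti' (show a ≤ len ν - 1 by omega)
    omega
  have hbot : (len ν - 1, 0) ∈ H := by
    rw [hmem]
    have := (lt_len_iff hν (len ν - 1)).mp (by omega)
    omega
  have hex : ∃ j, m j < ν j := ⟨a, by omega⟩
  set i := Nat.find hex with hidef
  have hi : m i < ν i := Nat.find_spec hex
  have himin : ∀ j, j < i → m j = ν j := fun j hj => by
    have := Nat.find_min hex hj
    have := hmle j
    omega
  have hil : i < len ν := (lt_len_iff hν i).mpr (by omega)
  refine ⟨i, hil, ?_⟩
  -- squares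
  have lower : ∀ j, ν (j + 1) - 1 ≤ m j := by
    intro j
    by_contra hc
    apply hsq j (m j)
    have := hνs j; have := hmanti j
    refine ⟨(hmem _ _).mpr ?_, (hmem _ _).mpr ?_, (hmem _ _).mpr ?_, (hmem _ _).mpr ?_⟩ <;> omega
  have upper : ∀ j, i ≤ j → j + 1 < len ν → m j < ν (j + 1) := by
    intro j hij hjl
    by_contra hc
    have inv : ∀ x y : Cell, Relation.ReflTransGen (fun a b => a ∈ H ∧ b ∈ H ∧ cellAdj a b) x y →
        x.1 ≤ j → y.1 ≤ j := by
      intro x y hxy hx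
      induction hxy with
      | refl => exact hx
      | @tail b c _ hbc ih =>
        obtain ⟨h1, h2, h3⟩ := hbc
        by_contra hcon
        obtain ⟨b1, b2⟩ := b
        obtain ⟨c1, c2⟩ := c
        rw [hmem] at h1 h2
        unfold cellAdj at h3
        simp only at h3 ih hcon
        have e1 : b1 = j := by omega
        have e2 : c1 = j + 1 := by omega
        subst e1 e2
        omega
    have hstart : (i, m i) ∈ H := (hmem _ _).mpr ⟨le_rfl, hi⟩
    have := inv _ _ (hconn _ hstart _ hbot) hij
    simp only at this
    omega
  ext ⟨j, c⟩
  rw [hmem, mem_HH]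
  simp only
  have h1 := lower j
  by_cases hij : i ≤ j
  · by_cases hj : j + 1 < len ν
    · have := upper j hij hj
      omega
    · have e := eq_zero_of_len_le hν (j := j + 1) (by omega)
      have : m j ≤ m (len ν - 1) := hmanti' (by omega)
      omega
  · have := himin j (by omega)
    omega


/-! ## Ranks in chains -/

section
variable {V : Type*} [PartialOrder V]

noncomputable def rk (B : Finset V) (v : V) : ℕ := (B.filter fun u => u < v).card

lemma rk_lt (B : Finset V) {u v : V} (hu : u ∈ B) (h : u < v) : rk B u < rk B v := by
  refine Finset.card_lt_card ?_
  rw [Finset.ssubset_iff_of_subset]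
  · exact ⟨u, by simp [hu, h], by simp⟩
  · intro x hx
    rw [Finset.mem_filter] at hx ⊢
    exact ⟨hx.1, hx.2.trans h⟩

lemma rk_bound (B : Finset V) {v : V} (hv : v ∈ B) : rk B v < B.card := by
  refine Finset.card_lt_card ?_
  rw [Finset.ssubset_iff_of_subset (Finset.filter_subset _ _)]
  exact ⟨v, hv, by simp⟩

lemma rk_le_of {B : Finset V} (hB : ∀ u ∈ B, ∀ v ∈ B, u ≤ v ∨ v ≤ u) {u v : V} (hu : u ∈ B)
    (hv : v ∈ B) (h : rk B u ≤ rk B v) : u ≤ v := by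
  rcases hB u hu v hv with h1 | h1
  · exact h1
  · rcases h1.lt_or_eq with h2 | h2
    · have := rk_lt B hv h2; omega
    · exact h2.ge

lemma rk_inj {B : Finset V} (hB : ∀ u ∈ B, ∀ v ∈ B, u ≤ v ∨ v ≤ u) {u v : V} (hu : u ∈ B)
    (hv : v ∈ B) (h : rk B u = rk B v) : u = v :=
  le_antisymm (rk_le_of hB hu hv h.le) (rk_le_of hB hv hu h.ge)

lemma rk_surj {B : Finset V} (hB : ∀ u ∈ B, ∀ v ∈ B, u ≤ v ∨ v ≤ u) {k : ℕ} (hk : k < B.card) :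
    ∃ v ∈ B, rk B v = k := by
  have : B.image (rk B) = Finset.range B.card := by
    apply Finset.eq_of_subset_of_card_le
    · intro x hx
      obtain ⟨v, hv, rfl⟩ := Finset.mem_image.mp hx
      exact Finset.mem_range.mpr (rk_bound B hv)
    · rw [Finset.card_range, Finset.card_image_of_injOn]
      intro u hu v hv h
      exact rk_inj hB hu hv h
  have h2 : k ∈ B.image (rk B) := by rw [this]; exact Finset.mem_range.mpr hk
  simpa using h2

/-- an order-compatible bijection onto an initial segment is the rank -/
lemma rk_unique {B : Finset V} {n : ℕ} (κ : V → ℕ)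
    (hlt : ∀ u ∈ B, κ u < n) (hinj : ∀ u ∈ B, ∀ v ∈ B, κ u = κ v → u = v)
    (hsurj : ∀ k < n, ∃ u ∈ B, κ u = k)
    (hmono : ∀ u ∈ B, ∀ v ∈ B, κ u < κ v → u ≤ v) :
    B.card = n ∧ ∀ v ∈ B, κ v = rk B v := by
  have himg : ∀ m ≤ n, (B.filter fun u => κ u < m).card = m := by
    intro m hm
    have : (B.filter fun u => κ u < m).image κ = Finset.range m := by
      ext k
      rw [Finset.mem_image, Finset.mem_range]
      constructor
      · rintro ⟨u, hu, rfl⟩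
        exact (Finset.mem_filter.mp hu).2
      · intro hk
        obtain ⟨u, hu, rfl⟩ := hsurj k (by omega)
        exact ⟨u, Finset.mem_filter.mpr ⟨hu, hk⟩, rfl⟩
    rw [← Finset.card_image_of_injOn (f := κ), this, Finset.card_range]
    intro u hu v hv h
    exact hinj u (Finset.mem_filter.mp hu).1 v (Finset.mem_filter.mp hv).1 h
  constructor
  · conv_rhs => rw [← himg n le_rfl]
    rw [Finset.filter_true_of_mem hlt]
  · intro v hv
    conv_lhs => rw [← himg (κ v) (hlt v hv).le]
    unfold rk
    congr 1
    apply Finset.filter_congr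
    intro u hu
    constructor
    · intro h
      refine lt_of_le_of_ne (hmono u hu v hv h) ?_
      rintro rfl; omega
    · intro h
      by_contra hc
      rcases (Nat.lt_or_eq_of_le (not_lt.mp hc)) with h1 | h1
      · exact absurd (hmono v hv u hu h1) (not_le_of_gt h)
      · exact absurd (hinj v hv u hu h1) h.ne'
end

/-! ## Relative tabloids -/

section
variable {V : Type*} [PartialOrder V] (G : SimpleGraph V)

def cellsOf (A : Finset V) (T : (V → Cell) × (V → ℕ)) (i : ℕ) : Set Cell :=
  {c | ∃ u ∈ A, T.2 u = i ∧ T.1 u = c}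

structure IsT (A : Finset V) (ν : ℕ →₀ ℕ) (T : (V → Cell) × (V → ℕ)) : Prop where
  off : ∀ v, v ∉ A → T.1 v = (0, 0) ∧ T.2 v = 0
  inj : ∀ u ∈ A, ∀ v ∈ A, T.1 u = T.1 v → u = v
  rng : ∀ c, c ∈ DD ν ↔ ∃ v ∈ A, T.1 v = c
  hk_mem : ∀ v ∈ A, ∃ u ∈ A, T.2 u = T.2 v ∧ T.1 u = (T.2 v, 0)
  hk_min : ∀ v ∈ A, ∀ u ∈ A, T.2 u = T.2 v → ∀ i, T.1 u = (i, 0) → T.2 v ≤ i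
  removal : ∃ L : List ℕ, L.Nodup ∧ (∀ i, i ∈ L ↔ ∃ v ∈ A, T.2 v = i) ∧
    IsRemovalSeq (L.map (cellsOf A T)) (DD ν)
  stable : ∀ u ∈ A, ∀ v ∈ A, T.2 u = T.2 v → u ≠ v → ¬G.Adj u v
  incr : ∀ u ∈ A, ∀ v ∈ A, T.2 u = T.2 v → ct (T.1 u) < ct (T.1 v) → u ≤ v

lemma IsT.hk_lt {G : SimpleGraph V} {A : Finset V} {ν : ℕ →₀ ℕ} {T : (V → Cell) × (V → ℕ)}
    (h : IsT G A ν T) (hν : Antitone ν) {v : V} (hv : v ∈ A) : T.2 v < len ν := by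
  obtain ⟨u, hu, -, h2⟩ := h.hk_mem v hv
  have := (h.rng (T.2 v, 0)).mpr ⟨u, hu, h2⟩
  exact (lt_len_iff hν _).mpr this

noncomputable def cellAt (ν : ℕ →₀ ℕ) (i k : ℕ) : Cell :=
  if h : ∃ c ∈ HH ν i, ct c = -((len ν : ℤ) - 1) + k then h.choose else (0, 0)

lemma cellAt_spec {ν : ℕ →₀ ℕ} (hν : Antitone ν) {i : ℕ} (hi : i < len ν) {k : ℕ}
    (hk : k < hlen ν i) : cellAt ν i k ∈ HH ν i ∧ ct (cellAt ν i k) = -((len ν : ℤ) - 1) + k := by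
  have h := HH_surj hν hi k hk
  unfold cellAt
  rw [dif_pos h]
  exact h.choose_spec

lemma cellAt_eq {ν : ℕ →₀ ℕ} (hν : Antitone ν) {i : ℕ} (hi : i < len ν) {c : Cell}
    (hc : c ∈ HH ν i) {k : ℕ} (hk : ct c = -((len ν : ℤ) - 1) + k) : cellAt ν i k = c := by
  have := HH_bounds hν hi hc
  obtain ⟨h1, h2⟩ := cellAt_spec hν hi (k := k) (by omega)
  exact HH_inj hν h1 hc (by rw [h2, hk])

noncomputable def extT (ν : ℕ →₀ ℕ) (i : ℕ) (B : Finset V) (T : (V → Cell) × (V → ℕ)) :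
    (V → Cell) × (V → ℕ) :=
  (fun v => if v ∈ B then cellAt ν i (rk B v) else T.1 v,
   fun v => if v ∈ B then len (rem ν i) else T.2 v)

section
variable {G}
variable {A B : Finset V} {ν : ℕ →₀ ℕ} {i : ℕ} {T : (V → Cell) × (V → ℕ)}

lemma ext1 {v : V} (hv : v ∈ B) : (extT ν i B T).1 v = cellAt ν i (rk B v) := if_pos hv
lemma ext2 {v : V} (hv : v ∈ B) : (extT ν i B T).2 v = len (rem ν i) := if_pos hv
lemma ext1' {v : V} (hv : v ∉ B) : (extT ν i B T).1 v = T.1 v := if_neg hv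
lemma ext2' {v : V} (hv : v ∉ B) : (extT ν i B T).2 v = T.2 v := if_neg hv

lemma stab_chain (hcomp : ∀ u v : V, ¬G.Adj u v → u ≤ v ∨ v ≤ u)
    (hB : B ∈ stabs G A (hlen ν i)) : ∀ u ∈ B, ∀ v ∈ B, u ≤ v ∨ v ≤ u :=
  fun u hu v hv => hcomp u v (((mem_stabs G A B _).mp hB).2.2 u hu v hv)

lemma ext_hk_iff (hν : Antitone ν)
    (hT : IsT G (A \ B) (rem ν i) T) {u : V} (hu : u ∈ A) :
    (extT ν i B T).2 u = len (rem ν i) ↔ u ∈ B := by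
  constructor
  · intro h
    by_contra hc
    rw [ext2' hc] at h
    have := hT.hk_lt (rem_antitone hν i) (Finset.mem_sdiff.mpr ⟨hu, hc⟩)
    omega
  · exact fun h => ext2 h

lemma ext_HH (hcomp : ∀ u v : V, ¬G.Adj u v → u ≤ v ∨ v ≤ u) (hν : Antitone ν) (hi : i < len ν)
    (hB : B ∈ stabs G A (hlen ν i)) (c : Cell) :
    c ∈ HH ν i ↔ ∃ v ∈ B, (extT ν i B T).1 v = c := by
  have hcard := ((mem_stabs G A B _).mp hB).2.1
  constructor
  · intro hc
    have hb := HH_bounds hν hi hc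
    obtain ⟨k, hk⟩ : ∃ k : ℕ, ct c = -((len ν : ℤ) - 1) + k :=
      ⟨(ct c + ((len ν : ℤ) - 1)).toNat, by omega⟩
    obtain ⟨v, hv, hr⟩ := rk_surj (stab_chain hcomp hB) (k := k) (by omega)
    refine ⟨v, hv, ?_⟩
    rw [ext1 hv, hr]
    exact cellAt_eq hν hi hc hk
  · rintro ⟨v, hv, rfl⟩
    rw [ext1 hv]
    exact (cellAt_spec hν hi (by rw [← hcard]; exact rk_bound B hv)).1

lemma ext_mem_HH_iff (hcomp : ∀ u v : V, ¬G.Adj u v → u ≤ v ∨ v ≤ u) (hν : Antitone ν)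
    (hi : i < len ν) (hB : B ∈ stabs G A (hlen ν i)) (hT : IsT G (A \ B) (rem ν i) T)
    {u : V} (hu : u ∈ A) : (extT ν i B T).1 u ∈ HH ν i ↔ u ∈ B := by
  constructor
  · intro h
    by_contra hc
    rw [ext1' hc] at h
    exact h.2 ((hT.rng _).mpr ⟨u, Finset.mem_sdiff.mpr ⟨hu, hc⟩, rfl⟩)
  · intro h
    exact (ext_HH hcomp hν hi hB _).mpr ⟨u, h, rfl⟩

lemma ext_cells (hν : Antitone ν)
    (hT : IsT G (A \ B) (rem ν i) T) (hBA : B ⊆ A) :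
    cellsOf A (extT ν i B T) (len (rem ν i)) = {c | ∃ v ∈ B, (extT ν i B T).1 v = c} := by
  ext c
  constructor
  · rintro ⟨u, hu, h1, h2⟩
    exact ⟨u, (ext_hk_iff hν hT hu).mp h1, h2⟩
  · rintro ⟨u, hu, h2⟩
    exact ⟨u, hBA hu, ext2 hu, h2⟩

lemma ext_cells' {j : ℕ} (hj : j ≠ len (rem ν i)) :
    cellsOf A (extT ν i B T) j = cellsOf (A \ B) T j := by
  ext c
  constructor
  · rintro ⟨u, hu, h1, h2⟩
    have hc : u ∉ B := fun hc => hj (by rw [← h1, ext2 hc])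
    rw [ext2' hc] at h1
    rw [ext1' hc] at h2
    exact ⟨u, Finset.mem_sdiff.mpr ⟨hu, hc⟩, h1, h2⟩
  · rintro ⟨u, hu, h1, h2⟩
    obtain ⟨hu, hc⟩ := Finset.mem_sdiff.mp hu
    exact ⟨u, hu, by rw [ext2' hc, h1], by rw [ext1' hc, h2]⟩

lemma ext_isT (hcomp : ∀ u v : V, ¬G.Adj u v → u ≤ v ∨ v ≤ u) (hν : Antitone ν)
    (hi : i < len ν) (hB : B ∈ stabs G A (hlen ν i)) (hT : IsT G (A \ B) (rem ν i) T) :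
    IsT G A ν (extT ν i B T) := by
  obtain ⟨hBA, hcard, hst⟩ := (mem_stabs G A B _).mp hB
  have hch := stab_chain hcomp hB
  have hspec : ∀ v ∈ B, cellAt ν i (rk B v) ∈ HH ν i ∧
      ct (cellAt ν i (rk B v)) = -((len ν : ℤ) - 1) + rk B v := fun v hv =>
    cellAt_spec hν hi (by rw [← hcard]; exact rk_bound B hv)
  have hmH : ∀ {u}, u ∈ A → _ := fun {u} (hu : u ∈ A) => ext_mem_HH_iff hcomp hν hi hB hT hu
  have hhk : ∀ {u}, u ∈ A → _ := fun {u} (hu : u ∈ A) => ext_hk_iff hν hT hu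
  have hsd : ∀ {u}, u ∈ A → u ∉ B → u ∈ A \ B := fun h1 h2 => Finset.mem_sdiff.mpr ⟨h1, h2⟩
  have hsame : ∀ u ∈ A, ∀ v ∈ A, (extT ν i B T).2 u = (extT ν i B T).2 v → (u ∈ B ↔ v ∈ B) := by
    intro u hu v hv h
    rw [← hhk hu, ← hhk hv, h]
  refine ⟨?_, ?_, ?_, ?_, ?_, ?_, ?_, ?_⟩
  · intro v hv
    have h1 : v ∉ B := fun h => hv (hBA h)
    rw [ext1' h1, ext2' h1]
    exact hT.off v (fun h => hv (Finset.mem_sdiff.mp h).1)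
  · intro u hu v hv h
    have hiff : u ∈ B ↔ v ∈ B := by rw [← hmH hu, ← hmH hv, h]
    by_cases hub : u ∈ B
    · have hvb := hiff.mp hub
      rw [ext1 hub, ext1 hvb] at h
      have h1 := (hspec u hub).2
      have h2 := (hspec v hvb).2
      rw [h] at h1
      exact rk_inj hch hub hvb (by omega)
    · have hvb := fun h => hub (hiff.mpr h)
      rw [ext1' hub, ext1' hvb] at h
      exact hT.inj u (hsd hu hub) v (hsd hv hvb) h
  · intro c
    constructor
    · intro hc
      by_cases hcH : c ∈ HH ν i
      · obtain ⟨v, hv, h⟩ := (ext_HH hcomp hν hi hB (T := T) c).mp hcH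
        exact ⟨v, hBA hv, h⟩
      · have : c ∈ DD (rem ν i) := by
          rw [← DD_diff_HH ν hν i]; exact ⟨hc, hcH⟩
        obtain ⟨v, hv, h⟩ := (hT.rng c).mp this
        obtain ⟨hv1, hv2⟩ := Finset.mem_sdiff.mp hv
        exact ⟨v, hv1, by rw [ext1' hv2, h]⟩
    · rintro ⟨v, hv, rfl⟩
      by_cases hvb : v ∈ B
      · exact ((hmH hv).mpr hvb).1
      · rw [ext1' hvb]
        exact DD_rem_subset ν hν i ((hT.rng _).mpr ⟨v, hsd hv hvb, rfl⟩)
  · intro v hv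
    by_cases hvb : v ∈ B
    · have : ((len (rem ν i), 0) : Cell) ∈ HH ν i :=
        (HH_col hν hi _).mpr ⟨le_rfl, len_rem_lt hν hi⟩
      obtain ⟨u, hu, h⟩ := (ext_HH hcomp hν hi hB (T := T) _).mp this
      exact ⟨u, hBA hu, by rw [ext2 hu, ext2 hvb], by rw [h, ext2 hvb]⟩
    · obtain ⟨u, hu, h1, h2⟩ := hT.hk_mem v (hsd hv hvb)
      obtain ⟨hu1, hu2⟩ := Finset.mem_sdiff.mp hu
      exact ⟨u, hu1, by rw [ext2' hu2, ext2' hvb, h1], by rw [ext1' hu2, ext2' hvb, h2]⟩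
  · intro v hv u hu h j hj
    have hiff := hsame u hu v hv h
    by_cases hvb : v ∈ B
    · have hub := hiff.mpr hvb
      rw [ext2 hvb]
      have := (hmH hu).mpr hub
      rw [hj, HH_col hν hi] at this
      exact this.1
    · have hub := fun h => hvb (hiff.mp h)
      rw [ext2' hvb, ext2' hub] at h
      rw [ext1' hub] at hj
      rw [ext2' hvb]
      exact hT.hk_min v (hsd hv hvb) u (hsd hu hub) h j hj
  · obtain ⟨L, hL1, hL2, hL3⟩ := hT.removal
    have hnot : len (rem ν i) ∉ L := by
      intro h
      obtain ⟨v, hv, h⟩ := (hL2 _).mp h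
      have := hT.hk_lt (rem_antitone hν i) hv
      omega
    refine ⟨len (rem ν i) :: L, List.nodup_cons.mpr ⟨hnot, hL1⟩, ?_, ?_⟩
    · intro j
      rw [List.mem_cons, hL2]
      constructor
      · rintro (rfl | ⟨v, hv, h⟩)
        · obtain ⟨v, hv⟩ : B.Nonempty := by
            rw [← Finset.card_pos, hcard]; exact hlen_pos hν hi
          exact ⟨v, hBA hv, ext2 hv⟩
        · obtain ⟨hv1, hv2⟩ := Finset.mem_sdiff.mp hv
          exact ⟨v, hv1, by rw [ext2' hv2, h]⟩
      · rintro ⟨v, hv, h⟩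
        by_cases hvb : v ∈ B
        · left; rw [← h, ext2 hvb]
        · right; exact ⟨v, hsd hv hvb, by rw [← h, ext2' hvb]⟩
    · rw [List.map_cons]
      have e1 : cellsOf A (extT ν i B T) (len (rem ν i)) = HH ν i := by
        rw [ext_cells hν hT hBA]
        ext c
        exact (ext_HH hcomp hν hi hB c).symm
      have e2 : L.map (cellsOf A (extT ν i B T)) = L.map (cellsOf (A \ B) T) := by
        apply List.map_congr_left
        intro j hj
        exact ext_cells' (fun h => hnot (h ▸ hj))
      rw [e1, e2]
      refine ⟨HH_rimhook hν hi, ?_⟩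
      rw [DD_diff_HH ν hν i]
      exact hL3
  · intro u hu v hv h hne
    have hiff := hsame u hu v hv h
    by_cases hvb : v ∈ B
    · exact hst u (hiff.mpr hvb) v hvb
    · have hub := fun h => hvb (hiff.mp h)
      rw [ext2' hvb, ext2' hub] at h
      exact hT.stable u (hsd hu hub) v (hsd hv hvb) h hne
  · intro u hu v hv h hlt
    have hiff := hsame u hu v hv h
    by_cases hvb : v ∈ B
    · have hub := hiff.mpr hvb
      rw [ext1 hvb, ext1 hub, (hspec u hub).2, (hspec v hvb).2] at hlt
      exact rk_le_of hch hub hvb (by omega)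
    · have hub := fun h => hvb (hiff.mp h)
      rw [ext2' hvb, ext2' hub] at h
      rw [ext1' hvb, ext1' hub] at hlt
      exact hT.incr u (hsd hu hub) v (hsd hv hvb) h hlt

lemma ext_surj (hν : Antitone ν) (h0 : ν ≠ 0) (hT : IsT G A ν T) :
    ∃ i < len ν, ∃ B ∈ stabs G A (hlen ν i), ∃ T', IsT G (A \ B) (rem ν i) T' ∧
      extT ν i B T' = T := by
  obtain ⟨L, hL1, hL2, hL3⟩ := hT.removal
  have hlp := len_pos h0
  have hbot : ((len ν - 1, 0) : Cell) ∈ DD ν := (lt_len_iff hν _).mp (by omega)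
  obtain ⟨vb, hvb, -⟩ := (hT.rng _).mp hbot
  cases L with
  | nil => exact absurd ((hL2 (T.2 vb)).mpr ⟨vb, hvb, rfl⟩) (by simp)
  | cons i0 L =>
    rw [List.map_cons] at hL3
    obtain ⟨hrim, hrest⟩ := hL3
    rw [List.nodup_cons] at hL1
    obtain ⟨v0, hv0, hv0i⟩ := (hL2 i0).mp (by simp)
    obtain ⟨u0, hu0, hu1, hu2⟩ := hT.hk_mem v0 hv0
    rw [hv0i] at hu1 hu2
    have hcol : ((i0, 0) : Cell) ∈ cellsOf A T i0 := ⟨u0, hu0, hu1, hu2⟩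
    obtain ⟨i, hi, hH⟩ := rimhook_char hν hrim hcol
    have hi0 : i0 = len (rem ν i) := by
      apply le_antisymm
      · have h1 : ((len (rem ν i), 0) : Cell) ∈ HH ν i :=
          (HH_col hν hi _).mpr ⟨le_rfl, len_rem_lt hν hi⟩
        rw [← hH] at h1
        obtain ⟨u, hu, h2, h3⟩ := h1
        have := hT.hk_min v0 hv0 u hu (by rw [h2, hv0i]) _ h3
        omega
      · rw [hH, HH_col hν hi] at hcol
        exact hcol.1
    set B := A.filter fun u => T.2 u = i0 with hBdef
    have hmB : ∀ u, u ∈ B ↔ u ∈ A ∧ T.2 u = i0 := fun u => Finset.mem_filter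
    have hBH : ∀ c, c ∈ HH ν i ↔ ∃ u ∈ B, T.1 u = c := by
      intro c
      rw [← hH]
      constructor
      · rintro ⟨u, hu, h1, h2⟩
        exact ⟨u, (hmB u).mpr ⟨hu, h1⟩, h2⟩
      · rintro ⟨u, hu, h2⟩
        exact ⟨u, ((hmB u).mp hu).1, ((hmB u).mp hu).2, h2⟩
    have hκ : ∀ u ∈ B, ct (T.1 u) = -((len ν : ℤ) - 1) + (ct (T.1 u) + ((len ν : ℤ) - 1)).toNat := by
      intro u hu
      have := HH_bounds hν hi ((hBH _).mpr ⟨u, hu, rfl⟩)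
      omega
    have huniq := rk_unique (B := B) (n := hlen ν i)
      (fun u => (ct (T.1 u) + ((len ν : ℤ) - 1)).toNat)
      (by
        intro u hu
        have := HH_bounds hν hi ((hBH _).mpr ⟨u, hu, rfl⟩)
        omega)
      (by
        intro u hu v hv h
        have h1 := hκ u hu
        have h2 := hκ v hv
        have := HH_inj hν ((hBH _).mpr ⟨u, hu, rfl⟩) ((hBH _).mpr ⟨v, hv, rfl⟩) (by omega)
        exact hT.inj u ((hmB u).mp hu).1 v ((hmB v).mp hv).1 this)
      (by
        intro k hk
        obtain ⟨c, hc, hck⟩ := HH_surj hν hi k hk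
        obtain ⟨u, hu, rfl⟩ := (hBH c).mp hc
        exact ⟨u, hu, by omega⟩)
      (by
        intro u hu v hv h
        have h1 := hκ u hu
        have h2 := hκ v hv
        refine hT.incr u ((hmB u).mp hu).1 v ((hmB v).mp hv).1 ?_ (by omega)
        rw [((hmB u).mp hu).2, ((hmB v).mp hv).2])
    have hBs : B ∈ stabs G A (hlen ν i) := by
      rw [mem_stabs]
      refine ⟨Finset.filter_subset _ _, huniq.1, ?_⟩
      intro u hu v hv
      by_cases huv : u = v
      · subst huv; exact G.irrefl
      · refine hT.stable u ((hmB u).mp hu).1 v ((hmB v).mp hv).1 ?_ huv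
        rw [((hmB u).mp hu).2, ((hmB v).mp hv).2]
    have hmS : ∀ u, u ∈ A \ B ↔ u ∈ A ∧ T.2 u ≠ i0 := by
      intro u
      rw [Finset.mem_sdiff, hmB]
      tauto
    let T' : (V → Cell) × (V → ℕ) :=
      (fun v => if v ∈ A \ B then T.1 v else (0, 0), fun v => if v ∈ A \ B then T.2 v else 0)
    have t1 : ∀ {v}, v ∈ A \ B → T'.1 v = T.1 v := fun h => if_pos h
    have t2 : ∀ {v}, v ∈ A \ B → T'.2 v = T.2 v := fun h => if_pos h
    have hcells : ∀ j, j ≠ i0 → cellsOf (A \ B) T' j = cellsOf A T j := by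
      intro j hj
      ext c
      constructor
      · rintro ⟨u, hu, h1, h2⟩
        rw [t2 hu] at h1
        rw [t1 hu] at h2
        exact ⟨u, ((hmS u).mp hu).1, h1, h2⟩
      · rintro ⟨u, hu, h1, h2⟩
        have hu' := (hmS u).mpr ⟨hu, by rw [h1]; exact hj⟩
        exact ⟨u, hu', by rw [t2 hu', h1], by rw [t1 hu', h2]⟩
    refine ⟨i, hi, B, hBs, T', ⟨?_, ?_, ?_, ?_, ?_, ?_, ?_, ?_⟩, ?_⟩
    · intro v hv
      exact ⟨if_neg hv, if_neg hv⟩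
    · intro u hu v hv h
      rw [t1 hu, t1 hv] at h
      exact hT.inj u ((hmS u).mp hu).1 v ((hmS v).mp hv).1 h
    · intro c
      rw [← DD_diff_HH ν hν i]
      constructor
      · rintro ⟨hc1, hc2⟩
        obtain ⟨v, hv, h⟩ := (hT.rng c).mp hc1
        have hv' := (hmS v).mpr ⟨hv, fun hc => hc2 ((hBH c).mpr ⟨v, (hmB v).mpr ⟨hv, hc⟩, h⟩)⟩
        exact ⟨v, hv', by rw [t1 hv', h]⟩
      · rintro ⟨v, hv, rfl⟩
        rw [t1 hv]
        refine ⟨(hT.rng _).mpr ⟨v, ((hmS v).mp hv).1, rfl⟩, fun hc => ?_⟩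
        obtain ⟨u, hu, h⟩ := (hBH _).mp hc
        have := hT.inj u ((hmB u).mp hu).1 v ((hmS v).mp hv).1 h
        subst this
        exact ((hmS u).mp hv).2 ((hmB u).mp hu).2
    · intro v hv
      obtain ⟨u, hu, h1, h2⟩ := hT.hk_mem v ((hmS v).mp hv).1
      have hu' := (hmS u).mpr ⟨hu, by rw [h1]; exact ((hmS v).mp hv).2⟩
      exact ⟨u, hu', by rw [t2 hu', t2 hv, h1], by rw [t1 hu', t2 hv, h2]⟩
    · intro v hv u hu h j hj
      rw [t2 hv, t2 hu] at h
      rw [t1 hu] at hj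
      rw [t2 hv]
      exact hT.hk_min v ((hmS v).mp hv).1 u ((hmS u).mp hu).1 h j hj
    · refine ⟨L, hL1.2, ?_, ?_⟩
      · intro j
        have h3 := hL2 j
        rw [List.mem_cons] at h3
        constructor
        · intro hj
          obtain ⟨v, hv, h⟩ := h3.mp (Or.inr hj)
          have hv' := (hmS v).mpr ⟨hv, by rw [h]; rintro rfl; exact hL1.1 hj⟩
          exact ⟨v, hv', by rw [t2 hv', h]⟩
        · rintro ⟨v, hv, h⟩
          rw [t2 hv] at h
          rcases h3.mpr ⟨v, ((hmS v).mp hv).1, h⟩ with h4 | h4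
          · exact absurd (h.trans h4) ((hmS v).mp hv).2
          · exact h4
      · rw [← DD_diff_HH ν hν i, ← hH]
        have : L.map (cellsOf (A \ B) T') = L.map (cellsOf A T) := by
          apply List.map_congr_left
          intro j hj
          exact hcells j (by rintro rfl; exact hL1.1 hj)
        rw [this]
        exact hrest
    · intro u hu v hv h hne
      rw [t2 hv, t2 hu] at h
      exact hT.stable u ((hmS u).mp hu).1 v ((hmS v).mp hv).1 h hne
    · intro u hu v hv h hlt
      rw [t2 hv, t2 hu] at h
      rw [t1 hv, t1 hu] at hlt
      exact hT.incr u ((hmS u).mp hu).1 v ((hmS v).mp hv).1 h hlt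
    · refine Prod.ext (funext fun v => ?_) (funext fun v => ?_)
      · by_cases hv : v ∈ B
        · rw [ext1 hv]
          refine cellAt_eq hν hi ((hBH _).mpr ⟨v, hv, rfl⟩) ?_
          rw [← huniq.2 v hv]
          exact hκ v hv
        · rw [ext1' hv]
          by_cases hvA : v ∈ A
          · exact t1 (Finset.mem_sdiff.mpr ⟨hvA, hv⟩)
          · rw [(hT.off v hvA).1]
            exact if_neg (fun h => hvA (Finset.mem_sdiff.mp h).1)
      · by_cases hv : v ∈ B
        · rw [ext2 hv, ← hi0, ((hmB v).mp hv).2]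
        · rw [ext2' hv]
          by_cases hvA : v ∈ A
          · exact t2 (Finset.mem_sdiff.mpr ⟨hvA, hv⟩)
          · rw [(hT.off v hvA).2]
            exact if_neg (fun h => hvA (Finset.mem_sdiff.mp h).1)

lemma ext_inj (hcomp : ∀ u v : V, ¬G.Adj u v → u ≤ v ∨ v ≤ u) (hν : Antitone ν)
    {i' : ℕ} {B' : Finset V} {T' : (V → Cell) × (V → ℕ)}
    (hi : i < len ν) (hB : B ∈ stabs G A (hlen ν i)) (hT : IsT G (A \ B) (rem ν i) T)
    (hi' : i' < len ν) (hB' : B' ∈ stabs G A (hlen ν i')) (hT' : IsT G (A \ B') (rem ν i') T')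
    (h : extT ν i B T = extT ν i' B' T') : i = i' ∧ B = B' ∧ T = T' := by
  have hb := ext_isT hcomp hν hi hB hT
  have hbot : ((len ν - 1, 0) : Cell) ∈ DD ν := (lt_len_iff hν _).mp (by omega)
  obtain ⟨vb, hvb, hvb2⟩ := (hb.rng _).mp hbot
  have key : ∀ (i : ℕ) (B : Finset V) (T : (V → Cell) × (V → ℕ)), i < len ν →
      B ∈ stabs G A (hlen ν i) → IsT G (A \ B) (rem ν i) T → (extT ν i B T).1 vb = (len ν - 1, 0) →
      B = A.filter fun u => (extT ν i B T).2 u = (extT ν i B T).2 vb := by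
    intro i B T hi hB hT hv
    have h1 : vb ∈ B := by
      rw [← ext_mem_HH_iff hcomp hν hi hB hT hvb, hv]
      exact HH_bottom hν hi
    ext u
    rw [Finset.mem_filter, ext2 h1]
    constructor
    · intro hu
      exact ⟨((mem_stabs G A B _).mp hB).1 hu, ext2 hu⟩
    · rintro ⟨hu, h2⟩
      exact (ext_hk_iff hν hT hu).mp h2
  have hBB : B = B' := by
    rw [key i B T hi hB hT hvb2, h]
    exact (key i' B' T' hi' hB' hT' (by rw [← h]; exact hvb2)).symm
  subst hBB
  have hii : i = i' := by
    have e1 := ((mem_stabs G A B _).mp hB).2.1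
    have e2 := ((mem_stabs G A B _).mp hB').2.1
    rw [e1] at e2
    unfold hlen at e2
    rcases lt_trichotomy i i' with h1 | h1 | h1
    · have := hν h1.le; omega
    · exact h1
    · have := hν h1.le; omega
  subst hii
  refine ⟨rfl, rfl, Prod.ext (funext fun v => ?_) (funext fun v => ?_)⟩
  · by_cases hv : v ∈ B
    · have : v ∉ A \ B := fun hc => (Finset.mem_sdiff.mp hc).2 hv
      rw [(hT.off v this).1, (hT'.off v this).1]
    · have := congrFun (congrArg Prod.fst h) v
      rwa [ext1' hv, ext1' hv] at this
  · by_cases hv : v ∈ B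
    · have : v ∉ A \ B := fun hc => (Finset.mem_sdiff.mp hc).2 hv
      rw [(hT.off v this).2, (hT'.off v this).2]
    · have := congrFun (congrArg Prod.snd h) v
      rwa [ext2' hv, ext2' hv] at this

end

def rowsOf (A : Finset V) (T : (V → Cell) × (V → ℕ)) (j : ℕ) : Set ℕ :=
  {a | ∃ v ∈ A, T.2 v = j ∧ (T.1 v).1 = a}

noncomputable def wt (N : ℕ) (A : Finset V) (T : (V → Cell) × (V → ℕ)) : ℚ :=
  (-1) ^ ∑ j ∈ Finset.range N, ((rowsOf A T j).ncard - 1)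

lemma rowsOf_eq (A : Finset V) (T : (V → Cell) × (V → ℕ)) (j : ℕ) :
    rowsOf A T j = Prod.fst '' cellsOf A T j := by
  ext a
  constructor
  · rintro ⟨v, hv, h1, h2⟩
    exact ⟨T.1 v, ⟨v, hv, h1, rfl⟩, h2⟩
  · rintro ⟨c, ⟨v, hv, h1, rfl⟩, h2⟩
    exact ⟨v, hv, h1, h2⟩

lemma ext_wt {G : SimpleGraph V} {A B : Finset V} {ν : ℕ →₀ ℕ} {i : ℕ}
    {T : (V → Cell) × (V → ℕ)} (hcomp : ∀ u v : V, ¬G.Adj u v → u ≤ v ∨ v ≤ u) (hν : Antitone ν)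
    (hi : i < len ν) (hB : B ∈ stabs G A (hlen ν i)) (hT : IsT G (A \ B) (rem ν i) T)
    (N : ℕ) (hN : len ν ≤ N) :
    wt N A (extT ν i B T) = (-1) ^ (len ν - 1 - i) * wt N (A \ B) T := by
  unfold wt
  rw [← pow_add]
  congr 1
  have hBA := ((mem_stabs G A B _).mp hB).1
  have hl := len_rem_lt hν hi
  have hmem : len (rem ν i) ∈ Finset.range N := Finset.mem_range.mpr (by omega)
  rw [← Finset.add_sum_erase _ _ hmem, ← Finset.add_sum_erase _ _ hmem]
  have e1 : rowsOf A (extT ν i B T) (len (rem ν i)) = Set.Ico i (len ν) := by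
    rw [rowsOf_eq, ext_cells hν hT hBA]
    have : {c | ∃ v ∈ B, (extT ν i B T).1 v = c} = HH ν i := by
      ext c; exact (ext_HH hcomp hν hi hB c).symm
    rw [this]
    ext a
    constructor
    · rintro ⟨c, hc, rfl⟩
      have := HH_bounds hν hi hc
      exact ⟨this.1, this.2.1⟩
    · rintro ⟨h1, h2⟩
      exact ⟨_, HH_row hν hi h1 h2, rfl⟩
  have e2 : rowsOf (A \ B) T (len (rem ν i)) = ∅ := by
    rw [Set.eq_empty_iff_forall_notMem]
    rintro a ⟨v, hv, h, -⟩
    have := hT.hk_lt (rem_antitone hν i) hv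
    omega
  rw [e1, e2, Set.ncard_empty]
  have e3 : (Set.Ico i (len ν)).ncard = len ν - i := by
    rw [← Finset.coe_Ico, Set.ncard_coe_finset, Nat.card_Ico]
  rw [e3]
  have e4 : ∑ j ∈ (Finset.range N).erase (len (rem ν i)),
        ((rowsOf A (extT ν i B T) j).ncard - 1) =
      ∑ j ∈ (Finset.range N).erase (len (rem ν i)), ((rowsOf (A \ B) T j).ncard - 1) := by
    refine Finset.sum_congr rfl fun j hj => ?_
    rw [rowsOf_eq, rowsOf_eq, ext_cells' (Finset.ne_of_mem_erase hj)]
  rw [e4]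
  omega

lemma IsT_finite [Fintype V] (A : Finset V) {ν : ℕ →₀ ℕ} (hν : Antitone ν) :
    {T | IsT G A ν T}.Finite := by
  have h1 : (Set.univ.pi fun _ : V => insert ((0, 0) : Cell) (DF ν : Set Cell)).Finite :=
    Set.Finite.pi fun _ => (Finset.finite_toSet _).insert _
  have h2 : (Set.univ.pi fun _ : V => Set.Iic (len ν)).Finite :=
    Set.Finite.pi fun _ => Set.finite_Iic _
  refine (h1.prod h2).subset ?_
  intro T hT
  refine ⟨fun v _ => ?_, fun v _ => ?_⟩
  · by_cases hv : v ∈ A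
    · right
      have := (hT.rng (T.1 v)).mpr ⟨v, hv, rfl⟩
      rw [Finset.mem_coe, mem_DF]
      exact this
    · left; exact (hT.off v hv).1
  · by_cases hv : v ∈ A
    · exact (hT.hk_lt hν hv).le
    · rw [(hT.off v hv).2]; exact Nat.zero_le _

noncomputable def TF [Fintype V] (A : Finset V) (ν : ℕ →₀ ℕ) : Finset ((V → Cell) × (V → ℕ)) :=
  if h : Antitone ν then (IsT_finite G A h).toFinset else ∅

lemma mem_TF [Fintype V] (A : Finset V) {ν : ℕ →₀ ℕ} (hν : Antitone ν)
    (T : (V → Cell) × (V → ℕ)) : T ∈ TF G A ν ↔ IsT G A ν T := by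
  unfold TF
  rw [dif_pos hν, Set.Finite.mem_toFinset]
  rfl

lemma TF_rec [Fintype V] (hcomp : ∀ u v : V, ¬G.Adj u v → u ≤ v ∨ v ≤ u) (A : Finset V)
    {ν : ℕ →₀ ℕ} (hν : Antitone ν) (h0 : ν ≠ 0) (N : ℕ) (hN : len ν ≤ N) :
    ∑ T ∈ TF G A ν, wt N A T = ∑ i ∈ Finset.range (len ν), ∑ B ∈ stabs G A (hlen ν i),
      ∑ T ∈ TF G (A \ B) (rem ν i), (-1) ^ (len ν - 1 - i) * wt N (A \ B) T := by
  have e : ∀ i ∈ Finset.range (len ν), (∑ B ∈ stabs G A (hlen ν i),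
      ∑ T ∈ TF G (A \ B) (rem ν i), (-1 : ℚ) ^ (len ν - 1 - i) * wt N (A \ B) T) =
      ∑ x ∈ (stabs G A (hlen ν i)).sigma fun B => TF G (A \ B) (rem ν i),
        (-1 : ℚ) ^ (len ν - 1 - i) * wt N (A \ x.1) x.2 := by
    intro i _
    rw [Finset.sum_sigma]
  rw [Finset.sum_congr rfl e, Finset.sum_sigma']
  symm
  have hm : ∀ x ∈ (Finset.range (len ν)).sigma fun i =>
      (stabs G A (hlen ν i)).sigma fun B => TF G (A \ B) (rem ν i),
      x.1 < len ν ∧ x.2.1 ∈ stabs G A (hlen ν x.1) ∧ IsT G (A \ x.2.1) (rem ν x.1) x.2.2 := by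
    intro x hx
    rw [Finset.mem_sigma, Finset.mem_sigma, Finset.mem_range,
      mem_TF G _ (rem_antitone hν _)] at hx
    exact hx
  refine Finset.sum_bij (fun x _ => extT ν x.1 x.2.1 x.2.2) ?_ ?_ ?_ ?_
  · intro x hx
    obtain ⟨h1, h2, h3⟩ := hm x hx
    rw [mem_TF G _ hν]
    exact ext_isT hcomp hν h1 h2 h3
  · intro x hx y hy h
    obtain ⟨h1, h2, h3⟩ := hm x hx
    obtain ⟨h1', h2', h3'⟩ := hm y hy
    obtain ⟨x1, x2, x3⟩ := x
    obtain ⟨y1, y2, y3⟩ := y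
    obtain ⟨e1, e2, e3⟩ := ext_inj hcomp hν h1 h2 h3 h1' h2' h3' h
    simp only at e1 e2 e3
    subst e1 e2 e3
    rfl
  · intro T hT
    rw [mem_TF G _ hν] at hT
    obtain ⟨i, hi, B, hB, T', hT', he⟩ := ext_surj hν h0 hT
    refine ⟨⟨i, B, T'⟩, ?_, he⟩
    rw [Finset.mem_sigma, Finset.mem_sigma, Finset.mem_range, mem_TF G _ (rem_antitone hν _)]
    exact ⟨hi, hB, hT'⟩
  · intro x hx
    obtain ⟨h1, h2, h3⟩ := hm x hx
    exact (ext_wt hcomp hν h1 h2 h3 N hN).symm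

lemma IsT_zero (A : Finset V) (T : (V → Cell) × (V → ℕ)) :
    IsT G A 0 T ↔ A = ∅ ∧ T = (fun _ => (0, 0), fun _ => 0) := by
  have hD : DD 0 = ∅ := by
    ext c; simp [DD]
  constructor
  · intro h
    have hA : A = ∅ := by
      rw [Finset.eq_empty_iff_forall_notMem]
      intro v hv
      have := (h.rng (T.1 v)).mpr ⟨v, hv, rfl⟩
      rw [hD] at this
      exact this
    subst hA
    refine ⟨rfl, Prod.ext (funext fun v => ?_) (funext fun v => ?_)⟩
    · exact (h.off v (by simp)).1
    · exact (h.off v (by simp)).2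
  · rintro ⟨rfl, rfl⟩
    refine ⟨by simp, by simp, by simp [hD], by simp, by simp, ⟨[], by simp, by simp, hD⟩,
      by simp, by simp⟩

lemma TF_zero [Fintype V] (A : Finset V) (N : ℕ) :
    ∑ T ∈ TF G A 0, wt N A T = if A = ∅ then 1 else 0 := by
  have h0 : Antitone ((0 : ℕ →₀ ℕ) : ℕ → ℕ) := fun _ _ _ => le_rfl
  split_ifs with h
  · have : TF G A 0 = {(fun _ => (0, 0), fun _ => 0)} := by
      ext T
      rw [mem_TF G A h0, IsT_zero, Finset.mem_singleton]
      simp [h]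
    rw [this, Finset.sum_singleton]
    subst h
    simp [wt, rowsOf]
  · have : TF G A 0 = ∅ := by
      rw [Finset.eq_empty_iff_forall_notMem]
      intro T hT
      rw [mem_TF G A h0, IsT_zero] at hT
      exact h hT.1
    rw [this, Finset.sum_empty]

lemma len_le_deg {ν : ℕ →₀ ℕ} : len ν ≤ deg ν := by
  unfold len deg Finsupp.sum
  rw [Finset.card_eq_sum_ones]
  refine Finset.sum_le_sum fun i hi => ?_
  exact Nat.one_le_iff_ne_zero.mpr (Finsupp.mem_support_iff.mp hi)

lemma JJ_TF [Fintype V] (hcomp : ∀ u v : V, ¬G.Adj u v → u ≤ v ∨ v ≤ u) (N n : ℕ) :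
    ∀ (A : Finset V) (ν : ℕ →₀ ℕ), Antitone ν → deg ν ≤ n → deg ν ≤ N →
    JJ n ν (fun l => XL G l A) = ∑ T ∈ TF G A ν, wt N A T := by
  induction n with
  | zero =>
    intro A ν _ h _
    have : ν = 0 := eq_zero_of_deg ν (by omega)
    subst this
    rw [TF_zero]
    rfl
  | succ n ih =>
    intro A ν hν h hN
    by_cases h0 : ν = 0
    · subst h0
      rw [TF_zero, JJ, if_pos rfl]
      rfl
    · rw [TF_rec G hcomp A hν h0 N (len_le_deg.trans hN), JJ, if_neg h0]
      refine Finset.sum_congr rfl fun i hi => ?_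
      have hi' := Finset.mem_range.mp hi
      have hd := rem_deg hν hi'
      have hp := hlen_pos hν hi'
      simp only [XL]
      rw [JJ_sum', Finset.mul_sum]
      refine Finset.sum_congr rfl fun B _ => ?_
      rw [ih (A \ B) (rem ν i) (rem_antitone hν i) (by omega) (by omega), Finset.mul_sum]
end


lemma diag_eq_DD {N : ℕ} (lam : Nat.Partition N) : diag lam = DD (pF lam) := by
  ext c
  rw [mem_diag]
  rfl

section
variable {V : Type*} [Fintype V] (G : SimpleGraph V) [PartialOrder V]
  {N : ℕ} (lam : Nat.Partition N)

lemma cellsOf_univ (T : (V → Cell) × (V → ℕ)) (i : ℕ) :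
    cellsOf Finset.univ T i = T.1 '' {u | T.2 u = i} := by
  ext c
  simp [cellsOf]

noncomputable def tabEquiv :
    SRHGTabloid G (fun a b : V => a ≤ b) lam ≃
      {T : (V → Cell) × (V → ℕ) // IsT G Finset.univ (pF lam) T} where
  toFun T := ⟨(T.pos, T.hk), by
    refine ⟨by simp, ?_, ?_, ?_, ?_, ?_, ?_, ?_⟩
    · intro u _ v _ h
      exact T.pos_inj h
    · intro c
      rw [← diag_eq_DD, ← T.pos_range]
      simp
    · intro v _
      obtain ⟨u, hu, h⟩ := T.hk_mem v
      exact ⟨u, Finset.mem_univ _, hu, h⟩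
    · intro v _ u _ h i hi
      exact T.hk_min v i ⟨u, h, hi⟩
    · obtain ⟨L, h1, h2, h3⟩ := T.removal
      refine ⟨L, h1, by simpa using h2, ?_⟩
      rw [← diag_eq_DD]
      have : cellsOf Finset.univ (T.pos, T.hk) = fun i => T.pos '' {u | T.hk u = i} :=
        funext fun i => cellsOf_univ _ i
      rw [this]
      exact h3
    · intro u _ v _
      exact T.stable u v
    · intro u _ v _
      exact T.increasing u v⟩
  invFun T :=
    { pos := T.1.1
      hk := T.1.2
      pos_inj := fun u v h => T.2.inj u (Finset.mem_univ _) v (Finset.mem_univ _) h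
      pos_range := by
        ext c
        rw [diag_eq_DD, T.2.rng]
        simp
      hk_mem := fun v => by
        obtain ⟨u, -, h1, h2⟩ := T.2.hk_mem v (Finset.mem_univ _)
        exact ⟨u, h1, h2⟩
      hk_min := by
        rintro v i ⟨u, h1, h2⟩
        exact T.2.hk_min v (Finset.mem_univ _) u (Finset.mem_univ _) h1 i h2
      removal := by
        obtain ⟨L, h1, h2, h3⟩ := T.2.removal
        refine ⟨L, h1, by simpa using h2, ?_⟩
        rw [diag_eq_DD]
        have : cellsOf Finset.univ T.1 = fun i => T.1.1 '' {u | T.1.2 u = i} :=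
          funext fun i => cellsOf_univ _ i
        rw [this] at h3
        exact h3
      stable := fun u v => T.2.stable u (Finset.mem_univ _) v (Finset.mem_univ _)
      increasing := fun u v => T.2.incr u (Finset.mem_univ _) v (Finset.mem_univ _) }
  left_inv _ := rfl
  right_inv _ := rfl

lemma tabSign_eq (T : SRHGTabloid G (fun a b : V => a ≤ b) lam) :
    ((tabSign T : ℤ) : ℚ) = wt N Finset.univ (tabEquiv G lam T).1 := by
  unfold tabSign wt rowsOf
  push_cast
  congr 1
  refine Finset.sum_congr rfl fun i _ => ?_
  congr 2
  ext a
  simp [tabEquiv]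

lemma card_diff :
    (Nat.card {T : SRHGTabloid G (fun a b : V => a ≤ b) lam // tabSign T = 1} : ℚ) -
      (Nat.card {T : SRHGTabloid G (fun a b : V => a ≤ b) lam // tabSign T = -1} : ℚ) =
    ∑ T ∈ TF G Finset.univ (pF lam), wt N Finset.univ T := by
  have hν := pF_antitone lam
  have hfin : Finite {T : (V → Cell) × (V → ℕ) // IsT G Finset.univ (pF lam) T} :=
    IsT_finite G Finset.univ hν
  have hfin2 : Finite (SRHGTabloid G (fun a b : V => a ≤ b) lam) :=
    Finite.of_equiv _ (tabEquiv G lam).symm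
  haveI := Fintype.ofFinite (SRHGTabloid G (fun a b : V => a ≤ b) lam)
  have e1 : ∑ T ∈ TF G Finset.univ (pF lam), wt N Finset.univ T =
      ∑ T : SRHGTabloid G (fun a b : V => a ≤ b) lam, ((tabSign T : ℤ) : ℚ) := by
    symm
    refine Finset.sum_bij (fun T _ => (tabEquiv G lam T).1) ?_ ?_ ?_ ?_
    · intro T _
      exact (mem_TF G _ hν _).mpr (tabEquiv G lam T).2
    · intro S _ T _ h
      exact (tabEquiv G lam).injective (Subtype.ext h)
    · intro T hT
      refine ⟨(tabEquiv G lam).symm ⟨T, (mem_TF G _ hν _).mp hT⟩, Finset.mem_univ _, ?_⟩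
      rw [Equiv.apply_symm_apply]
    · intro T _
      exact tabSign_eq G lam T
  rw [e1]
  rw [Nat.card_eq_fintype_card, Nat.card_eq_fintype_card, Fintype.card_subtype,
    Fintype.card_subtype]
  rw [Finset.card_filter, Finset.card_filter]
  push_cast
  rw [← Finset.sum_sub_distrib]
  refine Finset.sum_congr rfl fun T _ => ?_
  rcases neg_one_pow_eq_or ℤ (∑ i ∈ Finset.range N,
    ({a : ℕ | ∃ v, T.hk v = i ∧ (T.pos v).1 = a}.ncard - 1)) with h | h
  · have : tabSign T = 1 := h
    rw [this]; norm_num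
  · have : tabSign T = -1 := h
    rw [this]; norm_num
end

lemma exists_lst (l : List ℕ) : ∃ μ : ℕ → ℕ, μ 0 = 0 ∧ (∀ i, l.length < i → μ i = 0) ∧
    lst μ l.length = l := by
  induction l with
  | nil => exact ⟨fun _ => 0, rfl, fun _ _ => rfl, rfl⟩
  | cons a l ih =>
    obtain ⟨μ, h0, h1, h2⟩ := ih
    refine ⟨fun i => if i = l.length + 1 then a else μ i, by simp [h0], ?_, ?_⟩
    · intro i hi
      rw [List.length_cons] at hi
      simp only
      rw [if_neg (by omega), h1 i (by omega)]
    · rw [List.length_cons, lst]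
      simp only [if_true]
      congr 1
      conv_rhs => rw [← h2]
      have : ∀ n ≤ l.length, lst (fun i => if i = l.length + 1 then a else μ i) n = lst μ n := by
        intro n hn
        induction n with
        | zero => rfl
        | succ n ih =>
          rw [lst, lst, ih (by omega)]
          rw [if_neg (by omega)]
      exact this _ le_rfl

lemma sCoeff_X {V : Type*} [Fintype V] (G : SimpleGraph V)
    (lam : Nat.Partition (Fintype.card V)) :
    sCoeff (XCoeff G) lam =
      JJ (Fintype.card V) (pF lam) (fun l => XL G l Finset.univ) := by
  have hex : ∃ c : Nat.Partition (Fintype.card V) →₀ ℚ,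
      ∀ μ, XCoeff G μ = c.sum fun ν a => a * schurFn ν μ := by
    obtain ⟨c, hc⟩ := exists_expansion (N := Fintype.card V) (fun l => XL G l Finset.univ)
      ⟨fun l l' h => XL_perm G h _, fun l => XL_filter G l _⟩
      (fun l hl => by
        by_contra h
        exact hl (XL_card G l _ h))
    refine ⟨Finsupp.equivFunOnFinite.symm c, fun μ => ?_⟩
    rw [Finsupp.sum_fintype _ _ (fun _ => by simp)]
    simp only [Finsupp.equivFunOnFinite_symm_apply_apply]
    by_cases hμ : μ 0 = 0 ∧ ∃ n, ∀ i, n < i → μ i = 0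
    · obtain ⟨h0, n, hn⟩ := hμ
      rw [XCoeff_eq G μ n h0 hn, hc]
      refine Finset.sum_congr rfl fun ν _ => ?_
      rw [schurFn_eq ν μ n h0 hn]
    · have h1 : XCoeff G μ = 0 := by
        by_contra h; exact hμ (XCoeff_zero G μ h)
      rw [h1]
      symm
      refine Finset.sum_eq_zero fun ν _ => ?_
      have h2 : schurFn ν μ = 0 := by
        by_contra h; exact hμ (schurFn_zero ν μ h)
      rw [h2, mul_zero]
  unfold sCoeff
  rw [dif_pos hex]
  have hc := hex.choose_spec
  set c := hex.choose
  refine coeff_eq (fun ν => c ν) _ (fun l _ => ?_) lam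
  obtain ⟨μ, h0, h1, h2⟩ := exists_lst l
  have := hc μ
  rw [XCoeff_eq G μ _ h0 h1, Finsupp.sum_fintype _ _ (fun _ => by simp), h2] at this
  rw [this]
  refine Finset.sum_congr rfl fun ν _ => ?_
  rw [schurFn_eq ν μ _ h0 h1, h2]

/-- For a finite simple graph `G`, a partition `lam` of `|V(G)|`,
and a partial order on `V(G)` in which any two nonadjacent vertices are comparable,
the coefficient of the Schur function `s_lam` in the chromatic symmetric function
`X_G` is the sum of the signs of all special rim hook `G`-tabloids of shape `lam`:
`[s_lam] X_G = ∑_{T ∈ 𝒯_{lam,G}} sgn T`. -/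
theorem schurCoeff_eq_sum_tabSign
    {V : Type*} [Fintype V] (G : SimpleGraph V) (po : PartialOrder V)
    (hcomp : ∀ u v : V, ¬G.Adj u v → po.le u v ∨ po.le v u)
    (lam : Nat.Partition (Fintype.card V)) :
    sCoeff (XCoeff G) lam =
      (Nat.card {T : SRHGTabloid G po.le lam // tabSign T = 1} : ℚ) -
      (Nat.card {T : SRHGTabloid G po.le lam // tabSign T = -1} : ℚ) := by
  letI := po
  rw [sCoeff_X, JJ_TF G hcomp (Fintype.card V) (Fintype.card V) Finset.univ (pF lam)
    (pF_antitone lam) (pF_deg lam).le (pF_deg lam).le, ← card_diff]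
end

section
/- Let n ≥ 1 and n ≥ m ≥ 0, and let λ = (λ_1, ..., λ_k) be a partition of n+m with λ_k = 1. For any partial order on the vertices of the generalized net GN_{n,m} in which nonadjacent vertices are comparable, every special rim hook GN_{n,m}-tabloid T of shape λ has at least one body vertex (anchor or buoy) appearing in its tail; that is, the tail of T cannot contain only pendants. -/
open scoped Classical

theorem rowLen_anti {N : ℕ} (lam : Nat.Partition N) {i j : ℕ} (h : i ≤ j) :
    rowLen lam j ≤ rowLen lam i := by
  unfold rowLen
  have hs : (lam.parts.sort (· ≤ ·)).reverse.Pairwise (· ≥ ·) := by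
    rw [List.pairwise_reverse]
    exact Multiset.pairwise_sort _ _
  generalize (lam.parts.sort (· ≤ ·)).reverse = l at hs
  rcases Nat.lt_or_ge j l.length with hj | hj
  · rw [List.getD_eq_getElem _ _ hj, List.getD_eq_getElem _ _ (lt_of_le_of_lt h hj)]
    rcases h.eq_or_lt with rfl | h
    · exact le_rfl
    · exact List.pairwise_iff_getElem.1 hs i j _ _ h
  · rw [List.getD_eq_default _ _ hj]
    exact Nat.zero_le _

theorem exists_rowLen {N : ℕ} (lam : Nat.Partition N) {a : ℕ} (h : a ∈ lam.parts) :
    ∃ i, rowLen lam i = a := by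
  have h' : a ∈ (lam.parts.sort (· ≤ ·)).reverse := by simpa using h
  obtain ⟨i, hi, e⟩ := List.mem_iff_getElem.1 h'
  exact ⟨i, by unfold rowLen; rw [List.getD_eq_getElem _ _ hi, e]⟩

theorem connected_of_removalSeq {L : List (Set Cell)} : ∀ {D : Set Cell},
    IsRemovalSeq L D → ∀ H ∈ L, CellConnected H := by
  induction L with
  | nil => intro D _ H hH; simp at hH
  | cons A L ih =>
    intro D h H hH
    rcases List.mem_cons.1 hH with rfl | hH
    · exact h.1.2.1.2.1
    · exact ih h.2 H hH

/-- A rim hook meeting the head meets the first column in a head row. -/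
theorem head_hk {V : Type*} {G : SimpleGraph V} {r : V → V → Prop} {N : ℕ}
    {lam : Nat.Partition N} (T : SRHGTabloid G r lam) (v : V)
    (hv : 2 ≤ rowLen lam (T.pos v).1) : 2 ≤ rowLen lam (T.hk v) := by
  obtain ⟨L, -, hL, hrem⟩ := T.removal
  have hc : CellConnected (T.pos '' {u | T.hk u = T.hk v}) :=
    connected_of_removalSeq hrem _ (List.mem_map.2 ⟨T.hk v, (hL _).2 ⟨v, rfl⟩, rfl⟩)
  have hp := hc (T.pos v) ⟨v, rfl, rfl⟩ _ (T.hk_mem v)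
  by_contra hcon
  have key : ∀ d : Cell, Relation.ReflTransGen
      (fun a b => a ∈ T.pos '' {u | T.hk u = T.hk v} ∧
        b ∈ T.pos '' {u | T.hk u = T.hk v} ∧ cellAdj a b) (T.pos v) d →
      2 ≤ rowLen lam d.1 := by
    intro d hd
    induction hd with
    | refl => exact hv
    | @tail a b _ hab ih =>
      by_contra hb
      obtain ⟨ha, hbm, hadj⟩ := hab
      have hbd : b ∈ diag lam := by
        rw [← T.pos_range]
        exact Set.image_subset_range _ _ hbm
      have hb2 : b.2 < rowLen lam b.1 := hbd
      rcases hadj with ⟨h1, -⟩ | ⟨h1, -⟩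
      · rw [h1] at ih; exact hb ih
      · have ha0 : a = (a.1, 0) := Prod.ext rfl (by show a.2 = 0; omega)
        rw [ha0] at ha
        have := rowLen_anti lam (T.hk_min v _ ha)
        omega
  exact hcon (key _ hp)

/-- For `n ≥ 1`, `n ≥ m ≥ 0`, and a partition `lam` of `n + m`
whose smallest part is `1`, for any partial order on the vertices of the generalized
net `GN_{n,m}` in which nonadjacent vertices are comparable, every special rim hook
`GN_{n,m}`-tabloid of shape `lam` has at least one body vertex in its tail (the rows
of length `1`); the tail cannot contain only pendants. -/
theorem tail_not_only_pendants_genNet (n m : ℕ) (hn : 1 ≤ n) (hm : m ≤ n)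
    (lam : Nat.Partition (n + m)) (hlast : 1 ∈ lam.parts)
    (po : PartialOrder (Fin n ⊕ Fin m))
    (hcomp : ∀ u v, ¬(genNet n m).Adj u v → po.le u v ∨ po.le v u)
    (T : SRHGTabloid (genNet n m) po.le lam) :
    ∃ v : Fin n, rowLen lam (T.pos (Sum.inl v)).1 = 1 := by
  by_contra hcon
  push Not at hcon
  have hdiag : ∀ c : Cell, c.2 < rowLen lam c.1 → ∃ v, T.pos v = c := by
    intro c hc
    have : c ∈ Set.range T.pos := by rw [T.pos_range]; exact hc
    exact this
  have h2 : ∀ v : Fin n, 2 ≤ rowLen lam (T.hk (Sum.inl v)) := by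
    intro v
    apply head_hk
    have h1 : T.pos (Sum.inl v) ∈ diag lam := by
      rw [← T.pos_range]; exact Set.mem_range_self _
    have h1' : (T.pos (Sum.inl v)).2 < rowLen lam (T.pos (Sum.inl v)).1 := h1
    have := hcon v
    omega
  have hinj : ∀ u v : Fin n, T.hk (Sum.inl u) = T.hk (Sum.inl v) → u = v := by
    intro u v h
    by_contra hne
    have hne' : (Sum.inl u : Fin n ⊕ Fin m) ≠ Sum.inl v := fun e => hne (Sum.inl.inj e)
    refine T.stable _ _ h hne' ?_
    rw [genNet, SimpleGraph.fromRel_adj]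
    exact ⟨hne', Or.inl trivial⟩
  obtain ⟨t, ht⟩ := exists_rowLen lam hlast
  let f : (Fin n ⊕ Fin n) ⊕ Unit → Cell := fun x => match x with
    | Sum.inl (Sum.inl v) => (T.hk (Sum.inl v), 0)
    | Sum.inl (Sum.inr v) => (T.hk (Sum.inl v), 1)
    | Sum.inr _ => (t, 0)
  have hf : ∀ x, (f x).2 < rowLen lam (f x).1 := by
    rintro ((v | v) | _)
    · have := h2 v; show 0 < rowLen lam (T.hk (Sum.inl v)); omega
    · have := h2 v; show 1 < rowLen lam (T.hk (Sum.inl v)); omega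
    · show 0 < rowLen lam t; omega
  have hne : ∀ v : Fin n, T.hk (Sum.inl v) ≠ t := by
    intro v e
    have := h2 v
    rw [e] at this
    omega
  have hfi : Function.Injective f := by
    rintro ((u | u) | _) ((v | v) | _) h
    all_goals simp only [f, Prod.mk.injEq] at h
    · rw [hinj u v h.1]
    · omega
    · exact absurd h.1 (hne u)
    · omega
    · rw [hinj u v h.1]
    · omega
    · exact absurd h.1.symm (hne v)
    · omega
    · rfl
  choose g hg using fun x => hdiag (f x) (hf x)
  have hgi : Function.Injective g := by
    intro x y h
    apply hfi
    rw [← hg x, ← hg y, h]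
  have hcard := Fintype.card_le_of_injective g hgi
  simp only [Fintype.card_sum, Fintype.card_fin, Fintype.card_unit] at hcard
  omega
end
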